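/- arXiv:1412.7976 — 3 statements merged into one kernel-verified Lean document; each statement's English description precedes it below -/
import Mathlib

section
/- Let N ≥ 2, let Ω ⊂ ℝ^N be a bounded open set, and let p > 2. Let u : ℝ^N → ℝ be a Lipschitz function with A := ∫_{Ω ∩ {u>1}} |∇u|² dx > 0 and B := ∫_{Ω ∩ {u>1}} (u − 1)^p dx > 0, and set s_u := (A/B)^{1/(p−2)}. For s > 0 define ζ_s(x) = min(u(x), 1) + s (u(x) − 1)_+. Then: (i) J(ζ_s) < J(ζ_{s_u}) for every s > 0 with s ≠ s_u, so the map s ↦ J(ζ_s) attains its strict maximum on (0,∞) exactly at s = s_u; and (ii) J(ζ_s) → −∞ as s → ∞. -/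
open MeasureTheory Metric Set

/-- The free-boundary energy functional
`J(u) = ∫_Ω [ (1/2)|∇u|² + χ_{u>1} − (1/p)(u−1)₊^p ] dx`. -/
noncomputable def J {N : ℕ} (Ω : Set (EuclideanSpace ℝ (Fin N))) (p : ℝ)
    (u : EuclideanSpace ℝ (Fin N) → ℝ) : ℝ :=
  ∫ x in Ω, ((1 / 2) * ‖gradient u x‖ ^ 2
    + Set.indicator {y | 1 < u y} (fun _ => (1 : ℝ)) x
    - (1 / p) * (max (u x - 1) 0) ^ p)


lemma aux_grad {N : ℕ} (p : ℝ) (hp : 2 < p)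
    (u : EuclideanSpace ℝ (Fin N) → ℝ) (L : NNReal) (hu : LipschitzWith L u)
    (s : ℝ) (hs : 0 < s) :
    ∀ᵐ x, ((1 / 2) * ‖gradient (fun x => min (u x) 1 + s * max (u x - 1) 0) x‖ ^ 2
    + Set.indicator {y | 1 < min (u y) 1 + s * max (u y - 1) 0} (fun _ => (1 : ℝ)) x
    - (1 / p) * (max ((min (u x) 1 + s * max (u x - 1) 0) - 1) 0) ^ p) =
    (Set.indicator {x | 1 < u x}ᶜ (fun x => (1 / 2) * ‖fderiv ℝ u x‖ ^ 2) x
      + Set.indicator {y | 1 < u y} (fun _ => (1 : ℝ)) x)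
    + (s ^ 2 / 2) * Set.indicator {x | 1 < u x} (fun x => ‖fderiv ℝ u x‖ ^ 2) x
    - (s ^ p / p) * Set.indicator {x | 1 < u x} (fun x => (u x - 1) ^ p) x := by
  have hv : LipschitzWith L (fun x => max (u x - 1) 0) := by
    have h1 : LipschitzWith L (fun x => u x - 1) := by
      apply LipschitzWith.of_dist_le_mul
      intro x y
      simpa using hu.dist_le_mul x y
    exact h1.max_const 0
  have hz : (fun x => min (u x) 1 + s * max (u x - 1) 0)
      = fun x => u x + (s - 1) * max (u x - 1) 0 := by
    funext x
    rcases le_total (u x) 1 with h | h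
    · rw [min_eq_left h, max_eq_right (by linarith)]; ring
    · rw [min_eq_right h, max_eq_left (by linarith)]; ring
  filter_upwards [hu.ae_differentiableAt (μ := volume), hv.ae_differentiableAt (μ := volume)] with x hux hvx
  have hfd : ‖gradient (fun x => min (u x) 1 + s * max (u x - 1) 0) x‖
      = ‖fderiv ℝ u x + (s - 1) • fderiv ℝ (fun x => max (u x - 1) 0) x‖ := by
    rw [hz, gradient, LinearIsometryEquiv.norm_map]
    rw [fderiv_fun_add hux (hvx.const_mul _), fderiv_const_mul hvx]
  rw [hfd]
  by_cases h : 1 < u x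
  · have e : (fun x => max (u x - 1) 0) =ᶠ[nhds x] fun x => u x - 1 := by
      filter_upwards [(isOpen_lt continuous_const hu.continuous).mem_nhds h] with y hy
      exact max_eq_left (by have : 1 < u y := hy; linarith)
    have e2 : fderiv ℝ (fun x => max (u x - 1) 0) x = fderiv ℝ u x := by
      rw [e.fderiv_eq, fderiv_sub_const]
    have h0 : 0 < s * (u x - 1) := mul_pos hs (by linarith)
    have e3 : fderiv ℝ u x + (s - 1) • fderiv ℝ u x = s • fderiv ℝ u x := by module
    have m : min (u x) 1 + s * max (u x - 1) 0 = 1 + s * (u x - 1) := by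
      rw [min_eq_right h.le, max_eq_left (by linarith)]
    rw [e2, e3, norm_smul, m]
    simp only [indicator, mem_setOf_eq, mem_compl_iff, m, h, not_true, if_true, if_false]
    rw [if_pos (by linarith), show 1 + s * (u x - 1) - 1 = s * (u x - 1) by ring,
      max_eq_left h0.le, Real.mul_rpow hs.le (by linarith), mul_pow, Real.norm_eq_abs, sq_abs]
    ring
  · have hle : u x ≤ 1 := not_lt.1 h
    have e2 : fderiv ℝ (fun x => max (u x - 1) 0) x = 0 := by
      apply IsLocalMin.fderiv_eq_zero
      refine Filter.Eventually.of_forall fun y => ?_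
      simp [hle]
    have m : min (u x) 1 + s * max (u x - 1) 0 = u x := by
      rw [min_eq_left hle, max_eq_right (by linarith)]; ring
    rw [e2, m]
    simp only [indicator, mem_setOf_eq, mem_compl_iff, m, h, not_false_eq_true, if_true, if_false]
    rw [max_eq_right (by linarith), Real.zero_rpow (by linarith)]
    simp

lemma aux_J {N : ℕ} (Ω : Set (EuclideanSpace ℝ (Fin N)))
    (hΩo : IsOpen Ω) (hΩb : Bornology.IsBounded Ω) (p : ℝ) (hp : 2 < p)
    (u : EuclideanSpace ℝ (Fin N) → ℝ) (L : NNReal) (hu : LipschitzWith L u)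
    (A B : ℝ)
    (hA : A = ∫ x in Ω ∩ {x | 1 < u x}, ‖gradient u x‖ ^ 2)
    (hB : B = ∫ x in Ω ∩ {x | 1 < u x}, (u x - 1) ^ p) (hBpos : 0 < B) :
    ∃ C, ∀ s : ℝ, 0 < s → J Ω p (fun x => min (u x) 1 + s * max (u x - 1) 0)
      = C + (s ^ 2 / 2) * A - (s ^ p / p) * B := by
  have hfin : volume Ω ≠ ⊤ := hΩb.measure_lt_top.ne
  haveI : IsFiniteMeasure (volume.restrict Ω) := ⟨by simpa using hΩb.measure_lt_top⟩
  have hm : MeasurableSet {x | 1 < u x} := (isOpen_lt continuous_const hu.continuous).measurableSet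
  have i1 : Integrable (fun x => ‖fderiv ℝ u x‖ ^ 2) (volume.restrict Ω) := by
    refine Integrable.of_bound (C := (L:ℝ) ^ 2)
      ((measurable_fderiv ℝ u).norm.pow_const 2).aestronglyMeasurable
      (Filter.Eventually.of_forall fun x => ?_)
    rw [Real.norm_eq_abs, abs_of_nonneg (by positivity)]
    have := norm_fderiv_le_of_lipschitz ℝ hu (x₀ := x)
    gcongr
  have i2 : Integrable (Set.indicator {x | 1 < u x} (fun x => (u x - 1) ^ p))
      (volume.restrict Ω) := by
    rw [integrable_indicator_iff hm, IntegrableOn, Measure.restrict_restrict hm, inter_comm]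
    by_contra hc
    rw [integral_undef hc] at hB
    linarith
  have i3 : Integrable (Set.indicator {x | 1 < u x} (fun x => ‖fderiv ℝ u x‖ ^ 2))
      (volume.restrict Ω) := i1.indicator hm
  have i4 : Integrable (fun x => Set.indicator {x | 1 < u x}ᶜ (fun x => (1 / 2) * ‖fderiv ℝ u x‖ ^ 2) x
      + Set.indicator {y | 1 < u y} (fun _ => (1 : ℝ)) x) (volume.restrict Ω) :=
    ((i1.const_mul _).indicator hm.compl).add ((integrable_const _).indicator hm)
  refine ⟨∫ x in Ω, (Set.indicator {x | 1 < u x}ᶜ (fun x => (1 / 2) * ‖fderiv ℝ u x‖ ^ 2) x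
      + Set.indicator {y | 1 < u y} (fun _ => (1 : ℝ)) x), fun s hs => ?_⟩
  unfold J
  rw [integral_congr_ae (ae_restrict_of_ae (aux_grad p hp u L hu s hs))]
  rw [integral_sub (by exact i4.add (i3.const_mul _)) (i2.const_mul _), integral_add i4 (i3.const_mul _),
    integral_const_mul, integral_const_mul, setIntegral_indicator hm, setIntegral_indicator hm,
    hA, hB]
  simp only [gradient, LinearIsometryEquiv.norm_map]

theorem stmt_4 {N : ℕ} (hN : 2 ≤ N) (Ω : Set (EuclideanSpace ℝ (Fin N)))
    (hΩo : IsOpen Ω) (hΩb : Bornology.IsBounded Ω) (p : ℝ) (hp : 2 < p)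
    (u : EuclideanSpace ℝ (Fin N) → ℝ) (L : NNReal) (hu : LipschitzWith L u)
    (A B : ℝ)
    (hA : A = ∫ x in Ω ∩ {x | 1 < u x}, ‖gradient u x‖ ^ 2)
    (hB : B = ∫ x in Ω ∩ {x | 1 < u x}, (u x - 1) ^ p)
    (hApos : 0 < A) (hBpos : 0 < B)
    (s_u : ℝ) (hsu : s_u = (A / B) ^ (1 / (p - 2))) :
    (∀ s : ℝ, 0 < s → s ≠ s_u →
      J Ω p (fun x => min (u x) 1 + s * max (u x - 1) 0)
        < J Ω p (fun x => min (u x) 1 + s_u * max (u x - 1) 0)) ∧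
    Filter.Tendsto (fun s : ℝ => J Ω p (fun x => min (u x) 1 + s * max (u x - 1) 0))
      Filter.atTop Filter.atBot := by
  obtain ⟨C, hC⟩ := aux_J Ω hΩo hΩb p hp u L hu A B hA hB hBpos
  have hσ : 0 < s_u := by rw [hsu]; positivity
  have hpow : s_u ^ (p - 2) = A / B := by
    rw [hsu, ← Real.rpow_mul (by positivity), one_div_mul_cancel (by linarith), Real.rpow_one]
  have split : ∀ s : ℝ, 0 < s → s ^ p = s ^ (p - 2) * s ^ 2 := by
    intro s hs
    rw [← Real.rpow_natCast, ← Real.rpow_add hs]; norm_num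
  have hp0 : 0 < p := by linarith
  constructor
  · intro s hs hne
    rw [hC s hs, hC s_u hσ]
    set t := s / s_u with ht
    have htp : 0 < t := by positivity
    have hst : s = t * s_u := by rw [ht]; field_simp
    have hAe : A = B * s_u ^ (p - 2) := by rw [hpow]; field_simp
    have ht1 : t ≠ 1 := by
      intro h; rw [h, one_mul] at hst; exact hne hst
    have key : 1 + (p / 2) * (t ^ 2 - 1) < t ^ p := by
      have := one_add_mul_self_lt_rpow_one_add (s := t ^ 2 - 1) (by nlinarith [sq_nonneg t])
        (by intro h; apply ht1; nlinarith) (p := p / 2) (by linarith)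
      rw [show 1 + (t ^ 2 - 1) = t ^ 2 by ring, ← Real.rpow_natCast t 2,
        ← Real.rpow_mul htp.le] at this
      convert this using 2
      · norm_num
      · push_cast; ring
    have hsp : s ^ p = t ^ p * s_u ^ p := by rw [hst, Real.mul_rpow htp.le hσ.le]
    rw [hsp, split s_u hσ, hst, hAe]
    have hK : 0 < B * s_u ^ (p - 2) * s_u ^ 2 / p := by positivity
    have := mul_lt_mul_of_pos_left key hK
    have e : B * s_u ^ (p - 2) * s_u ^ 2 / p * (1 + p / 2 * (t ^ 2 - 1))
       = B * s_u ^ (p - 2) * s_u ^ 2 / p + B * s_u ^ (p - 2) * s_u ^ 2 / 2 * (t ^ 2 - 1) := by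
      field_simp
    rw [e] at this
    ring_nf at this ⊢
    linarith
  · have h1 : Filter.Tendsto (fun s : ℝ => C + s ^ 2 * (A / 2 - B / p * s ^ (p - 2)))
        Filter.atTop Filter.atBot := by
      apply Filter.tendsto_atBot_add_const_left
      apply Filter.Tendsto.atTop_mul_atBot₀ (Filter.tendsto_pow_atTop two_ne_zero)
      have := (tendsto_rpow_atTop (show 0 < p - 2 by linarith)).const_mul_atTop
        (show 0 < B / p by positivity)
      simp only [sub_eq_add_neg] at this ⊢
      exact Filter.tendsto_atBot_add_const_left _ _ (Filter.tendsto_neg_atTop_atBot.comp this)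
    refine h1.congr' ?_
    filter_upwards [Filter.eventually_gt_atTop 0] with s hs
    rw [hC s hs, split s hs]
    ring
end

section
/- Let N ≥ 2, let Ω ⊂ ℝ^N be a bounded open set, and let p > 2. Let u : ℝ^N → ℝ be a Lipschitz function such that: the closure of {u > 1} is contained in Ω; u is twice continuously differentiable on the open set {u > 1} with −Δu = (u − 1)^{p−1} there; ∫_{Ω ∩ {u>1}} |∇u|² dx = ∫_{Ω ∩ {u>1}} (u − 1)^p dx > 0; and J(u) ≤ J(v) for every Lipschitz function v : ℝ^N → ℝ satisfying v = u on {u ≤ 1}, {v > 1} ⊆ {u > 1}, and ∫_{Ω ∩ {v>1}} |∇v|² dx = ∫_{Ω ∩ {v>1}} (v − 1)^p dx > 0. Then u is nondegenerate: there exist constants r₀ > 0 and c > 0 such that for every x₀ with u(x₀) > 1 and r := dist(x₀, {u ≤ 1}) ≤ r₀, one has u(x₀) ≥ 1 + c·r. -/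
open MeasureTheory Metric Set

/-- The Laplacian: sum of second partial derivatives. -/
noncomputable def lap {N : ℕ} (u : EuclideanSpace ℝ (Fin N) → ℝ)
    (x : EuclideanSpace ℝ (Fin N)) : ℝ :=
  ∑ i : Fin N, fderiv ℝ (fun y => fderiv ℝ u y (EuclideanSpace.single i 1)) x
    (EuclideanSpace.single i 1)

open Filter Topology in
lemma second_deriv_nonneg (g g' : ℝ → ℝ) (c : ℝ)
    (h1 : ∀ᶠ t in 𝓝 (0 : ℝ), HasDerivAt g (g' t) t) (h2 : HasDerivAt g' c 0)
    (hm : IsLocalMin g 0) : 0 ≤ c := by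
  by_contra hc
  push Not at hc
  have e1 : deriv g =ᶠ[𝓝 0] g' := h1.mono fun t ht => ht.deriv
  have e2 : deriv (deriv g) 0 = c := by
    rw [e1.deriv_eq]; exact h2.deriv
  have hmax : IsLocalMax g 0 :=
    isLocalMax_of_deriv_deriv_neg (by rw [e2]; exact hc) hm.deriv_eq_zero
      h1.self_of_nhds.continuousAt
  have hconst : g =ᶠ[𝓝 0] fun _ => g 0 := by
    filter_upwards [hm, hmax] with t a b
    exact le_antisymm b a
  have e3 : deriv g =ᶠ[𝓝 0] fun _ => 0 := by
    have := hconst.deriv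
    simpa using this
  have : deriv (deriv g) 0 = 0 := by rw [e3.deriv_eq]; simp
  rw [e2] at this
  linarith

lemma barrier_second (lam a b c : ℝ) :
    (∀ t : ℝ, HasDerivAt (fun t => c * Real.exp (-lam * (a + 2 * b * t + t ^ 2)))
      (c * (Real.exp (-lam * (a + 2 * b * t + t ^ 2)) * (-lam * (2 * b + 2 * t)))) t) ∧
    HasDerivAt (fun t => c * (Real.exp (-lam * (a + 2 * b * t + t ^ 2)) * (-lam * (2 * b + 2 * t))))
      (c * Real.exp (-lam * a) * (4 * lam ^ 2 * b ^ 2 - 2 * lam)) 0 := by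
  have h0 : ∀ t : ℝ, HasDerivAt (fun t => Real.exp (-lam * (a + 2 * b * t + t ^ 2)))
      (Real.exp (-lam * (a + 2 * b * t + t ^ 2)) * (-lam * (2 * b + 2 * t))) t := by
    intro t
    have : HasDerivAt (fun t : ℝ => -lam * (a + 2 * b * t + t ^ 2)) (-lam * (2 * b + 2 * t)) t := by
      have := ((((hasDerivAt_id t).const_mul (2 * b)).const_add a).add ((hasDerivAt_id t).pow 2)).const_mul (-lam)
      refine this.congr_deriv ?_
      simp
    exact this.exp
  refine ⟨fun t => (h0 t).const_mul c, ?_⟩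
  have h3 : HasDerivAt (fun t : ℝ => -lam * (2 * b + 2 * t)) (-lam * 2) 0 := by
    have := ((((hasDerivAt_id (0:ℝ)).const_mul 2).const_add (2 * b))).const_mul (-lam)
    refine this.congr_deriv ?_
    simp
  have := ((h0 0).mul h3).const_mul c
  refine this.congr_deriv ?_
  simp
  ring

lemma norm_shift {N : ℕ} (d : EuclideanSpace ℝ (Fin N)) (i : Fin N) (t : ℝ) :
    ‖d + t • EuclideanSpace.single i (1 : ℝ)‖ ^ 2 = ‖d‖ ^ 2 + 2 * d i * t + t ^ 2 := by
  rw [norm_add_sq_real]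
  simp [inner_smul_right, norm_smul, EuclideanSpace.inner_single_right]
  ring

open Filter Topology in
lemma lap_ge_of_min {N : ℕ} (u : EuclideanSpace ℝ (Fin N) → ℝ) (S : Set (EuclideanSpace ℝ (Fin N)))
    (hS : IsOpen S) (hC2 : ContDiffOn ℝ 2 u S) (z y : EuclideanSpace ℝ (Fin N)) (hz : z ∈ S)
    (lam c : ℝ)
    (hm : IsLocalMin (fun x => u x - c * Real.exp (-lam * ‖x - y‖ ^ 2)) z) :
    c * Real.exp (-lam * ‖z - y‖ ^ 2) * (4 * lam ^ 2 * ‖z - y‖ ^ 2 - 2 * N * lam) ≤ lap u z := by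
  have key : ∀ i : Fin N, c * Real.exp (-lam * ‖z - y‖ ^ 2) * (4 * lam ^ 2 * ((z - y) i) ^ 2 - 2 * lam)
      ≤ fderiv ℝ (fun y => fderiv ℝ u y (EuclideanSpace.single i 1)) z
        (EuclideanSpace.single i 1) := by
    intro i
    set e : EuclideanSpace ℝ (Fin N) := EuclideanSpace.single i 1 with he
    have hline : ∀ t : ℝ, HasDerivAt (fun t : ℝ => z + t • e) e t := by
      intro t
      have := ((hasDerivAt_id t).smul_const e).const_add z
      simpa using this
    have hcont : Tendsto (fun t : ℝ => z + t • e) (𝓝 0) (𝓝 z) := by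
      have := (hline 0).continuousAt.tendsto
      simpa using this
    obtain ⟨hb1, hb2⟩ := barrier_second lam (‖z - y‖ ^ 2) ((z - y) i) c
    have hinS : ∀ᶠ t : ℝ in 𝓝 0, z + t • e ∈ S := hcont (hS.mem_nhds hz)
    have hu1 : ∀ᶠ t : ℝ in 𝓝 0, HasDerivAt (fun t : ℝ => u (z + t • e)) (fderiv ℝ u (z + t • e) e) t := by
      filter_upwards [hinS] with t ht
      have hd : DifferentiableAt ℝ u (z + t • e) :=
        ((hC2.contDiffAt (hS.mem_nhds ht)).differentiableAt (by norm_num))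
      exact hd.hasFDerivAt.comp_hasDerivAt t (hline t)
    have hu2 : HasDerivAt (fun t : ℝ => fderiv ℝ u (z + t • e) e)
        (fderiv ℝ (fun y => fderiv ℝ u y e) z e) 0 := by
      have hd : DifferentiableAt ℝ (fun y => fderiv ℝ u y e) z := by
        have h1 : ContDiffAt ℝ 1 (fderiv ℝ u) z :=
          (hC2.contDiffAt (hS.mem_nhds hz)).fderiv_right (by norm_num)
        exact (h1.differentiableAt (by norm_num)).clm_apply (differentiableAt_const e)
      have hd' : HasFDerivAt (fun y => fderiv ℝ u y e) (fderiv ℝ (fun y => fderiv ℝ u y e) z)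
          (z + (0 : ℝ) • e) := by simpa using hd.hasFDerivAt
      exact hd'.comp_hasDerivAt (0 : ℝ) (hline 0)
    have hmin : IsLocalMin (fun t : ℝ => u (z + t • e)
        - c * Real.exp (-lam * (‖z - y‖ ^ 2 + 2 * (z - y) i * t + t ^ 2))) 0 := by
      have : ∀ᶠ t in 𝓝 (0 : ℝ), _ := hcont.eventually hm
      filter_upwards [this] with t ht
      have e1 : z + t • e - y = (z - y) + t • e := by abel
      rw [e1, norm_shift] at ht
      simpa using ht
    have := second_deriv_nonneg _ _ _ (hu1.mono fun t ht => ht.sub (hb1 t)) (hu2.sub hb2) hmin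
    linarith
  have hsum := Finset.sum_le_sum (fun i (_ : i ∈ Finset.univ) => key i)
  refine le_trans (le_of_eq ?_) hsum
  rw [← Finset.mul_sum, Finset.sum_sub_distrib, ← Finset.mul_sum, EuclideanSpace.real_norm_sq_eq]
  simp
  ring_nf
  simp

lemma lower_bound {N : ℕ} (hN : 2 ≤ N) (p : ℝ)
    (u : EuclideanSpace ℝ (Fin N) → ℝ) (K : ℝ) (hK : 0 < K)
    (hu : ∀ x y, |u x - u y| ≤ K * dist x y) (hc : Continuous u)
    (hC2 : ContDiffOn ℝ 2 u {x | 1 < u x})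
    (heq : ∀ x, 1 < u x → -lap u x = (u x - 1) ^ (p - 1))
    (x₀ y : EuclideanSpace ℝ (Fin N)) (r β : ℝ) (hr : 0 < r) (hβ : 0 < β)
    (hball : ∀ x, dist x x₀ < r → 1 < u x) (hy : dist y x₀ ≤ r / 4)
    (huy : β * r ≤ u y - 1) :
    (β / 2) * (Real.exp (-(2 * N * K ^ 2 / β ^ 2) / 16) - Real.exp (-(2 * N * K ^ 2 / β ^ 2) / 4)) * r
      ≤ u x₀ - 1 := by
  set Λ : ℝ := 2 * N * K ^ 2 / β ^ 2 with hΛ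
  have hNpos : (0 : ℝ) < N := by
    have : 0 < N := by omega
    exact_mod_cast this
  have hΛpos : 0 < Λ := by positivity
  set lam : ℝ := Λ / r ^ 2 with hlam
  have hlampos : 0 < lam := by positivity
  set c : ℝ := β * r / 2 with hcdef
  have hcpos : 0 < c := by positivity
  have hS : IsOpen {x | 1 < u x} := isOpen_lt continuous_const hc
  have hf : Continuous (fun x => u x - c * Real.exp (-lam * ‖x - y‖ ^ 2)) := by fun_prop
  obtain ⟨z, hz, hzmin⟩ := (isCompact_closedBall y (r / 2)).exists_isMinOn
    ⟨y, mem_closedBall_self (by positivity)⟩ hf.continuousOn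
  have hzd : ‖z - y‖ ≤ r / 2 := by simpa [dist_eq_norm] using hz
  have hzS : 1 < u z := by
    apply hball
    have := dist_triangle z y x₀
    rw [dist_eq_norm z y] at this
    linarith
  have hedge : lam * (r / 2) ^ 2 = Λ / 4 := by
    rw [hlam]; field_simp; norm_num
  have hedge2 : lam * (r / 4) ^ 2 = Λ / 16 := by
    rw [hlam]; field_simp; norm_num
  have hexp : Real.exp (-Λ / 4) > 0 := Real.exp_pos _
  have claim : -(c * Real.exp (-Λ / 4)) ≤ u z - 1 - c * Real.exp (-lam * ‖z - y‖ ^ 2) := by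
    by_contra hcon
    push Not at hcon
    -- not on the sphere
    have h1 : ‖z - y‖ < r / 2 := by
      refine lt_of_le_of_ne hzd fun h => ?_
      rw [h, neg_mul, hedge, ← neg_div] at hcon
      linarith
    have h2 : β * r / (2 * K) < ‖z - y‖ := by
      by_contra h2
      push Not at h2
      have := hu z y
      rw [dist_eq_norm] at this
      have h3 : K * ‖z - y‖ ≤ β * r / 2 := by
        calc K * ‖z - y‖ ≤ K * (β * r / (2 * K)) := by gcongr
          _ = β * r / 2 := by field_simp
      have h4 := (abs_le.1 (this.trans h3)).1
      have h5 : Real.exp (-lam * ‖z - y‖ ^ 2) ≤ 1 := by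
        rw [Real.exp_le_one_iff, neg_mul]
        have : 0 ≤ lam * ‖z - y‖ ^ 2 := by positivity
        linarith
      have h6 : c * Real.exp (-lam * ‖z - y‖ ^ 2) ≤ c := by nlinarith
      have h7 : 0 < c * Real.exp (-Λ / 4) := by positivity
      linarith
    have hloc : IsLocalMin (fun x => u x - c * Real.exp (-lam * ‖x - y‖ ^ 2)) z := by
      apply hzmin.isLocalMin
      apply mem_nhds_iff.2 ⟨ball y (r / 2), ball_subset_closedBall, isOpen_ball, ?_⟩
      simpa [dist_eq_norm] using h1
    have h3 := lap_ge_of_min u _ hS hC2 z y hzS lam c hloc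
    have h4 : lap u z ≤ 0 := by
      have := heq z hzS
      have h5 : 0 ≤ (u z - 1) ^ (p - 1) := Real.rpow_nonneg (by linarith) _
      linarith
    have h5 : 0 < 4 * lam ^ 2 * ‖z - y‖ ^ 2 - 2 * N * lam := by
      have h6 : (β * r / (2 * K)) ^ 2 < ‖z - y‖ ^ 2 := by gcongr
      have h7 : 2 * lam * (β * r / (2 * K)) ^ 2 = N := by
        rw [hlam, hΛ]; field_simp
      have h8 : 2 * lam * ‖z - y‖ ^ 2 > N := by
        rw [← h7]; gcongr
      nlinarith
    have h6 : 0 < c * Real.exp (-lam * ‖z - y‖ ^ 2) * (4 * lam ^ 2 * ‖z - y‖ ^ 2 - 2 * N * lam) := by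
      positivity
    linarith
  have hx : x₀ ∈ closedBall y (r / 2) := by
    rw [mem_closedBall, dist_comm]; linarith
  have h := hzmin hx
  simp only [mem_ofPred_eq] at h
  have h2 : Real.exp (-Λ / 16) ≤ Real.exp (-lam * ‖x₀ - y‖ ^ 2) := by
    apply Real.exp_le_exp.2
    rw [neg_mul, neg_div, ← hedge2]
    have : ‖x₀ - y‖ ≤ r / 4 := by rw [← dist_eq_norm, dist_comm]; exact hy
    gcongr
  have h3 : c * Real.exp (-Λ / 16) ≤ c * Real.exp (-lam * ‖x₀ - y‖ ^ 2) := by gcongr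
  have h4 : (β / 2) * (Real.exp (-Λ / 16) - Real.exp (-Λ / 4)) * r
    = c * Real.exp (-Λ / 16) - c * Real.exp (-Λ / 4) := by rw [hcdef]; ring
  rw [h4]
  linarith

lemma norm_gradient_eq {N : ℕ} (f : EuclideanSpace ℝ (Fin N) → ℝ) (x : EuclideanSpace ℝ (Fin N)) :
    ‖gradient f x‖ = ‖fderiv ℝ f x‖ := by
  simp [gradient]

lemma int_fderiv {N : ℕ} (w : EuclideanSpace ℝ (Fin N) → ℝ) (C : NNReal) (hw : LipschitzWith C w)
    (S : Set (EuclideanSpace ℝ (Fin N))) (hS : Bornology.IsBounded S) :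
    IntegrableOn (fun x => ‖fderiv ℝ w x‖ ^ 2) S := by
  refine Measure.integrableOn_of_bounded (M := (C : ℝ) ^ 2) hS.measure_lt_top.ne
    ((measurable_fderiv ℝ w).norm.pow_const 2).aestronglyMeasurable ?_
  refine Filter.Eventually.of_forall fun x => ?_
  rw [Real.norm_of_nonneg (by positivity)]
  have := norm_fderiv_le_of_lipschitz ℝ hw (x₀ := x)
  gcongr

lemma int_pow {N : ℕ} (w : EuclideanSpace ℝ (Fin N) → ℝ) (hw : Continuous w) (p : ℝ) (hp : 0 ≤ p)
    (S : Set (EuclideanSpace ℝ (Fin N))) (hS : Bornology.IsBounded S) :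
    IntegrableOn (fun x => (w x) ^ p) S := by
  have hc : Continuous (fun x => (w x) ^ p) := hw.rpow_const fun x => Or.inr hp
  exact (hc.continuousOn.integrableOn_compact hS.isCompact_closure).mono_set subset_closure

/-- competitor -/
noncomputable def compf {N : ℕ} (u : EuclideanSpace ℝ (Fin N) → ℝ) (t : ℝ)
    (w : EuclideanSpace ℝ (Fin N) → ℝ) (x : EuclideanSpace ℝ (Fin N)) : ℝ :=
  min (u x) 1 + t * w x

lemma compf_lip {N : ℕ} (u : EuclideanSpace ℝ (Fin N) → ℝ) (L : NNReal) (hu : LipschitzWith L u)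
    (t : ℝ) (w : EuclideanSpace ℝ (Fin N) → ℝ) (C : NNReal) (hw : LipschitzWith C w) :
    ∃ L', LipschitzWith L' (compf u t w) := by
  have h1 : LipschitzWith (max L 0) (fun x => min (u x) 1) := hu.min (LipschitzWith.const 1)
  have h2 : LipschitzWith (‖t‖₊ * C) (fun x => t * w x) := by
    refine LipschitzWith.of_dist_le_mul fun x y => ?_
    rw [Real.dist_eq, ← mul_sub, abs_mul, ← Real.dist_eq]
    have := hw.dist_le_mul x y
    have h3 : |t| * dist (w x) (w y) ≤ |t| * (C * dist x y) := by gcongr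
    simpa [mul_assoc] using h3
  exact ⟨_, h1.add h2⟩

lemma compf_of_gt {N : ℕ} (u : EuclideanSpace ℝ (Fin N) → ℝ) (t : ℝ)
    (w : EuclideanSpace ℝ (Fin N) → ℝ) (x : EuclideanSpace ℝ (Fin N)) (hx : 1 < u x) :
    compf u t w x = 1 + t * w x := by
  rw [compf, min_eq_right hx.le]

lemma compf_of_le {N : ℕ} (u : EuclideanSpace ℝ (Fin N) → ℝ) (t : ℝ)
    (w : EuclideanSpace ℝ (Fin N) → ℝ) (x : EuclideanSpace ℝ (Fin N)) (hx : u x ≤ 1)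
    (h0 : 0 ≤ w x) (h1 : w x ≤ max (u x - 1) 0) :
    compf u t w x = u x ∧ w x = 0 := by
  have : w x = 0 := by
    rw [max_eq_right (by linarith)] at h1
    exact le_antisymm h1 h0
  rw [compf, min_eq_left hx, this]
  simp

lemma compf_set {N : ℕ} (u : EuclideanSpace ℝ (Fin N) → ℝ) (t : ℝ) (ht : 0 < t)
    (w : EuclideanSpace ℝ (Fin N) → ℝ) (h0 : ∀ x, 0 ≤ w x) (h1 : ∀ x, w x ≤ max (u x - 1) 0)
    (x : EuclideanSpace ℝ (Fin N)) :
    1 < compf u t w x ↔ 0 < w x := by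
  rcases lt_or_ge 1 (u x) with hx | hx
  · rw [compf_of_gt u t w x hx]
    constructor
    · intro h
      by_contra h2
      have : w x = 0 := le_antisymm (not_lt.1 h2) (h0 x)
      rw [this] at h; simp at h
    · intro h
      have : 0 < t * w x := by positivity
      linarith
  · obtain ⟨a, b⟩ := compf_of_le u t w x hx (h0 x) (h1 x)
    rw [a, b]
    simp [hx]

lemma pos_imp {N : ℕ} (u : EuclideanSpace ℝ (Fin N) → ℝ) 
    (w : EuclideanSpace ℝ (Fin N) → ℝ) (h1 : ∀ x, w x ≤ max (u x - 1) 0)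
    (x : EuclideanSpace ℝ (Fin N)) (hx : 0 < w x) : 1 < u x := by
  have := lt_of_lt_of_le hx (h1 x)
  rcases lt_max_iff.1 this with h | h
  · linarith
  · exact absurd h (lt_irrefl _)

open Filter Topology in
lemma compf_fderiv_gt {N : ℕ} (u : EuclideanSpace ℝ (Fin N) → ℝ) (hu : Continuous u) (t : ℝ)
    (w : EuclideanSpace ℝ (Fin N) → ℝ) (x : EuclideanSpace ℝ (Fin N)) (hx : 1 < u x) :
    fderiv ℝ (compf u t w) x = t • fderiv ℝ w x := by
  have : compf u t w =ᶠ[𝓝 x] fun y => 1 + (t • w) y := by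
    filter_upwards [(isOpen_lt continuous_const hu).mem_nhds hx] with y hy
    rw [compf_of_gt u t w y hy]; simp
  rw [this.fderiv_eq, fderiv_const_add, fderiv_const_smul_field]
  rfl

lemma fderiv_zero_of_zero {N : ℕ} (w : EuclideanSpace ℝ (Fin N) → ℝ) (h0 : ∀ x, 0 ≤ w x)
    (x : EuclideanSpace ℝ (Fin N)) (hx : w x = 0) : fderiv ℝ w x = 0 := by
  apply IsLocalMin.fderiv_eq_zero
  exact Filter.Eventually.of_forall fun y => by rw [hx]; exact h0 y

lemma compf_self {N : ℕ} (u : EuclideanSpace ℝ (Fin N) → ℝ) :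
    compf u 1 (fun x => max (u x - 1) 0) = u := by
  funext x
  rw [compf]
  rcases le_total (u x) 1 with h | h
  · rw [min_eq_left h, max_eq_right (by linarith)]; simp
  · rw [min_eq_right h, max_eq_left (by linarith)]; ring

lemma compf_fderiv_le {N : ℕ} (u : EuclideanSpace ℝ (Fin N) → ℝ) (L : NNReal)
    (hu : LipschitzWith L u) (t : ℝ)
    (w : EuclideanSpace ℝ (Fin N) → ℝ) (C : NNReal) (hw : LipschitzWith C w)
    (h0 : ∀ x, 0 ≤ w x) (h1 : ∀ x, w x ≤ max (u x - 1) 0) :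
    ∀ᵐ x : EuclideanSpace ℝ (Fin N), u x ≤ 1 →
      fderiv ℝ (compf u t w) x = fderiv ℝ (fun x => min (u x) 1) x := by
  have hm : LipschitzWith (max L 0) (fun x => min (u x) 1) := hu.min (LipschitzWith.const 1)
  filter_upwards [hw.ae_differentiableAt, hm.ae_differentiableAt] with x a b hx
  have hz := (compf_of_le u t w x hx (h0 x) (h1 x)).2
  have h3 := fderiv_zero_of_zero w h0 x hz
  have : compf u t w = (fun x => min (u x) 1) + (t • w) := by
    funext y; simp [compf]
  rw [this, fderiv_add b (a.const_smul t), fderiv_const_smul_field]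
  change _ + t • fderiv ℝ w x = _
  rw [h3]; simp

lemma compf_J {N : ℕ} (Ω : Set (EuclideanSpace ℝ (Fin N)))
    (hΩo : IsOpen Ω) (hΩb : Bornology.IsBounded Ω) (p : ℝ) (hp : 2 < p)
    (u : EuclideanSpace ℝ (Fin N) → ℝ) (L : NNReal) (hu : LipschitzWith L u)
    (hcl : {x | 1 < u x} ⊆ Ω) (t : ℝ) (ht : 0 < t)
    (w : EuclideanSpace ℝ (Fin N) → ℝ) (C : NNReal) (hw : LipschitzWith C w)
    (h0 : ∀ x, 0 ≤ w x) (h1 : ∀ x, w x ≤ max (u x - 1) 0) :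
    J Ω p (compf u t w) = (∫ x in Ω \ {x | 1 < u x}, (1 / 2) * ‖fderiv ℝ (fun x => min (u x) 1) x‖ ^ 2)
      + ((1 / 2) * t ^ 2 * (∫ x in {x | 1 < u x}, ‖fderiv ℝ w x‖ ^ 2)
        + volume.real {x | 0 < w x} - (1 / p) * t ^ p * (∫ x in {x | 1 < u x}, (w x) ^ p)) := by
  obtain ⟨L', hv⟩ := compf_lip u L hu t w C hw
  have hSo : IsOpen {x | 1 < u x} := isOpen_lt continuous_const hu.continuous
  have hSm := hSo.measurableSet
  have hSb : Bornology.IsBounded {x | 1 < u x} := hΩb.subset hcl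
  have hWm : MeasurableSet {x | 0 < w x} := (isOpen_lt continuous_const hw.continuous).measurableSet
  have hWS : {x | 0 < w x} ⊆ {x | 1 < u x} := fun x hx => pos_imp u w h1 x hx
  have hset : {y | 1 < compf u t w y} = {x | 0 < w x} := by
    ext x; exact compf_set u t ht w h0 h1 x
  have hind : ∀ s : Set (EuclideanSpace ℝ (Fin N)), Bornology.IsBounded s →
      IntegrableOn ({x | 0 < w x}.indicator (fun _ => (1 : ℝ))) s := by
    intro s hs
    exact (integrableOn_const (hs.measure_lt_top.ne)).indicator hWm
  unfold J
  simp only [norm_gradient_eq, hset]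
  have hint : IntegrableOn (fun x => 1 / 2 * ‖fderiv ℝ (compf u t w) x‖ ^ 2
      + {x | 0 < w x}.indicator (fun _ => (1 : ℝ)) x
      - 1 / p * max (compf u t w x - 1) 0 ^ p) Ω := by
    refine (((int_fderiv _ _ hv Ω hΩb).const_mul (1 / 2)).add (hind Ω hΩb)).sub
      ((int_pow _ ?_ p (by linarith) Ω hΩb).const_mul (1 / p))
    have := hv.continuous
    fun_prop
  rw [← integral_inter_add_sdiff hSm hint, add_comm]
  congr 1
  · apply setIntegral_congr_ae (hΩo.measurableSet.diff hSm)
    filter_upwards [compf_fderiv_le u L hu t w C hw h0 h1] with x hx hxm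
    have hxle : u x ≤ 1 := not_lt.1 hxm.2
    obtain ⟨a, b⟩ := compf_of_le u t w x hxle (h0 x) (h1 x)
    rw [hx hxle, a, max_eq_right (by linarith), Real.zero_rpow (by linarith)]
    simp [b]
  · rw [inter_eq_right.2 hcl]
    have e1 : ∫ x in {x | 1 < u x}, (1 / 2 * ‖fderiv ℝ (compf u t w) x‖ ^ 2
        + {x | 0 < w x}.indicator (fun _ => (1 : ℝ)) x
        - 1 / p * max (compf u t w x - 1) 0 ^ p)
        = ∫ x in {x | 1 < u x}, ((1 / 2 * t ^ 2) * ‖fderiv ℝ w x‖ ^ 2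
        + {x | 0 < w x}.indicator (fun _ => (1 : ℝ)) x
        - (1 / p * t ^ p) * (w x) ^ p) := by
      apply setIntegral_congr_fun hSm
      intro x hx
      have hx' : 1 < u x := hx
      simp only
      have h3 : 0 ≤ t * w x := mul_nonneg ht.le (h0 x)
      rw [compf_fderiv_gt u hu.continuous t w x hx', compf_of_gt u t w x hx', norm_smul, add_sub_cancel_left,
        max_eq_left h3, Real.mul_rpow ht.le (h0 x), Real.norm_of_nonneg ht.le]
      ring
    rw [e1]
    have i1 := (int_fderiv w C hw _ hSb).const_mul (1 / 2 * t ^ 2)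
    have i2 := hind _ hSb
    have i3 := (int_pow w hw.continuous p (by linarith) _ hSb).const_mul (1 / p * t ^ p)
    have i12 : Integrable (fun x => (1 / 2 * t ^ 2) * ‖fderiv ℝ w x‖ ^ 2
        + {x | 0 < w x}.indicator (fun _ => (1 : ℝ)) x) (volume.restrict {x | 1 < u x}) := i1.add i2
    rw [integral_sub i12 i3, integral_add i1 i2, integral_const_mul, integral_const_mul,
      setIntegral_indicator hWm, inter_eq_right.2 hWS]
    simp

lemma compf_N {N : ℕ} (Ω : Set (EuclideanSpace ℝ (Fin N))) (p : ℝ) (hp : 2 < p)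
    (u : EuclideanSpace ℝ (Fin N) → ℝ) (hu : Continuous u)
    (hcl : {x | 1 < u x} ⊆ Ω) (t : ℝ) (ht : 0 < t)
    (w : EuclideanSpace ℝ (Fin N) → ℝ) (hw : Continuous w)
    (h0 : ∀ x, 0 ≤ w x) (h1 : ∀ x, w x ≤ max (u x - 1) 0) :
    (∫ x in Ω ∩ {x | 1 < compf u t w x}, ‖gradient (compf u t w) x‖ ^ 2)
      = t ^ 2 * (∫ x in {x | 1 < u x}, ‖fderiv ℝ w x‖ ^ 2) ∧
    (∫ x in Ω ∩ {x | 1 < compf u t w x}, (compf u t w x - 1) ^ p)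
      = t ^ p * (∫ x in {x | 1 < u x}, (w x) ^ p) := by
  have hSm : MeasurableSet {x | 1 < u x} := (isOpen_lt continuous_const hu).measurableSet
  have hWm : MeasurableSet {x | 0 < w x} := (isOpen_lt continuous_const hw).measurableSet
  have hWS : {x | 0 < w x} ⊆ {x | 1 < u x} := fun x hx => pos_imp u w h1 x hx
  have hset : {y | 1 < compf u t w y} = {x | 0 < w x} := by
    ext x; exact compf_set u t ht w h0 h1 x
  rw [hset, inter_eq_right.2 (hWS.trans hcl)]
  have hz : ∀ x ∈ {x | 1 < u x} \ {x | 0 < w x}, w x = 0 := fun x hx =>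
    le_antisymm (not_lt.1 hx.2) (h0 x)
  constructor
  · rw [← integral_const_mul, setIntegral_eq_of_subset_of_forall_sdiff_eq_zero hSm hWS]
    · apply setIntegral_congr_fun hWm
      intro x hx
      simp only
      rw [norm_gradient_eq, compf_fderiv_gt u hu t w x (hWS hx), norm_smul, Real.norm_of_nonneg ht.le]
      ring
    · intro x hx
      rw [fderiv_zero_of_zero w h0 x (hz x hx)]
      simp
  · rw [← integral_const_mul, setIntegral_eq_of_subset_of_forall_sdiff_eq_zero hSm hWS]
    · apply setIntegral_congr_fun hWm
      intro x hx
      simp only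
      rw [compf_of_gt u t w x (hWS hx), add_sub_cancel_left, Real.mul_rpow ht.le (h0 x)]
    · intro x hx
      rw [hz x hx, Real.zero_rpow (by linarith)]
      simp

open Filter Topology in
lemma num_aux (q : ℝ) : ∃ s₀ > (0 : ℝ), s₀ ≤ 1 / 2 ∧ ∃ C > (0 : ℝ), ∀ s, 0 ≤ s → s ≤ s₀ →
    (1 + s) * ((1 + s) / (1 - s)) ^ q ≤ 1 + C * s := by
  have hd : DifferentiableAt ℝ (fun s : ℝ => (1 + s) * ((1 + s) / (1 - s)) ^ q) 0 := by
    have h1 : DifferentiableAt ℝ (fun s : ℝ => (1 + s) / (1 - s)) 0 := by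
      apply DifferentiableAt.div
      · fun_prop
      · fun_prop
      · norm_num
    have h2 := h1.rpow_const (p := q) (Or.inl (by norm_num))
    exact DifferentiableAt.mul (by fun_prop) h2
  obtain ⟨C, hC⟩ := hd.hasDerivAt.isBigO_sub.bound
  obtain ⟨ε, hε, hb⟩ := Metric.eventually_nhds_iff.1 hC
  refine ⟨min (ε / 2) (1 / 2), by positivity, min_le_right _ _, |C| + 1, by positivity, ?_⟩
  intro s hs hs2
  have h3 : dist s 0 < ε := by
    rw [Real.dist_eq, sub_zero, abs_of_nonneg hs]
    have := hs2.trans (min_le_left _ _)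
    linarith
  have h4 := hb h3
  simp only [Real.norm_eq_abs, sub_zero, add_zero, div_one, Real.one_rpow, mul_one, abs_of_nonneg hs] at h4
  have h5 := (abs_le.1 h4).2
  have h6 : C * s ≤ (|C| + 1) * s := by
    have := le_abs_self C
    gcongr; linarith
  linarith

lemma num_main (p : ℝ) (hp : 2 < p) (A : ℝ) (hA : 0 < A) :
    ∃ s₀ > (0 : ℝ), s₀ ≤ 1 / 2 ∧ ∃ C > (0 : ℝ), ∀ s A₁ B₁ : ℝ, 0 ≤ s → s ≤ s₀ → 0 < A₁ →
      A₁ ≤ A * (1 + s) → A * (1 - s) ≤ B₁ → 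
      0 < B₁ ∧ ∃ t > 0, t ^ 2 * A₁ = t ^ p * B₁ ∧ t ^ 2 * A₁ ≤ A * (1 + C * s) := by
  obtain ⟨s₀, hs₀, hs₀', C, hC, h⟩ := num_aux (2 / (p - 2))
  refine ⟨s₀, hs₀, hs₀', C, hC, ?_⟩
  intro s A₁ B₁ hs hss hA₁ hA₁' hB
  have h1s : 0 < 1 - s := by linarith
  have hB₁ : 0 < B₁ := lt_of_lt_of_le (by positivity) hB
  have hx : 0 < A₁ / B₁ := by positivity
  have hp2 : 0 < p - 2 := by linarith
  have ht : 0 < (A₁ / B₁) ^ (1 / (p - 2)) := Real.rpow_pos_of_pos hx _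
  refine ⟨hB₁, (A₁ / B₁) ^ (1 / (p - 2)), ht, ?_, ?_⟩
  · have e : ((A₁ / B₁) ^ (1 / (p - 2))) ^ p = ((A₁ / B₁) ^ (1 / (p - 2))) ^ 2 * (A₁ / B₁) := by
      have e0 : ∀ y : ℝ, 0 < y → y ^ p = y ^ 2 * y ^ (p - 2) := by
        intro y hy
        rw [← Real.rpow_two, ← Real.rpow_add hy]
        congr 1; ring
      rw [e0 _ ht]
      congr 1
      rw [← Real.rpow_mul hx.le, one_div_mul_cancel hp2.ne', Real.rpow_one]
    rw [e]
    field_simp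
  · have e : ((A₁ / B₁) ^ (1 / (p - 2))) ^ 2 = (A₁ / B₁) ^ (2 / (p - 2)) := by
      rw [← Real.rpow_two, ← Real.rpow_mul hx.le]
      congr 1; ring
    rw [e]
    have h2 : A₁ / B₁ ≤ (1 + s) / (1 - s) := by
      calc A₁ / B₁ ≤ (A * (1 + s)) / (A * (1 - s)) := by gcongr
        _ = _ := by field_simp
    have h3 : (A₁ / B₁) ^ (2 / (p - 2)) ≤ ((1 + s) / (1 - s)) ^ (2 / (p - 2)) := by
      gcongr
    calc (A₁ / B₁) ^ (2 / (p - 2)) * A₁ ≤ ((1 + s) / (1 - s)) ^ (2 / (p - 2)) * (A * (1 + s)) := by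
          gcongr
      _ = A * ((1 + s) * ((1 + s) / (1 - s)) ^ (2 / (p - 2))) := by ring
      _ ≤ _ := by
        have := h s hs hss
        gcongr

/-- cut-off -/
noncomputable def psi {N : ℕ} (x₀ : EuclideanSpace ℝ (Fin N)) (r β K : ℝ)
    (x : EuclideanSpace ℝ (Fin N)) : ℝ :=
  8 * β * max (dist x x₀ - r / 8) 0 + K * max (dist x x₀ - r / 4) 0

lemma cut_lip {N : ℕ} (x₀ : EuclideanSpace ℝ (Fin N)) (a b : ℝ) (ha : 0 ≤ a) :
    LipschitzWith a.toNNReal (fun x => a * max (dist x x₀ - b) 0) := by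
  refine LipschitzWith.of_dist_le_mul fun x y => ?_
  rw [Real.dist_eq, ← mul_sub, abs_mul, abs_of_nonneg ha, Real.coe_toNNReal a ha]
  gcongr
  have h1 := abs_max_sub_max_le_abs (dist x x₀ - b) (dist y x₀ - b) 0
  refine h1.trans ?_
  have := abs_dist_sub_le x y x₀
  simpa using this

lemma psi_lip {N : ℕ} (x₀ : EuclideanSpace ℝ (Fin N)) (r β K : ℝ) (hβ : 0 ≤ β) (hK : 0 ≤ K) :
    ∃ C, LipschitzWith C (psi x₀ r β K) :=
  ⟨_, (cut_lip x₀ (8 * β) (r / 8) (by positivity)).add (cut_lip x₀ K (r / 4) hK)⟩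

lemma psi_nonneg {N : ℕ} (x₀ : EuclideanSpace ℝ (Fin N)) (r β K : ℝ) (hβ : 0 ≤ β) (hK : 0 ≤ K)
    (x : EuclideanSpace ℝ (Fin N)) : 0 ≤ psi x₀ r β K x := by
  unfold psi; positivity

lemma psi_pos {N : ℕ} (x₀ : EuclideanSpace ℝ (Fin N)) (r β K : ℝ) (hr : 0 < r) (hβ : 0 < β) (hK : 0 ≤ K)
    (x : EuclideanSpace ℝ (Fin N)) : 0 < psi x₀ r β K x ↔ x ∉ closedBall x₀ (r / 8) := by
  rw [mem_closedBall, not_le]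
  constructor
  · intro h
    by_contra h2
    push Not at h2
    unfold psi at h
    rw [max_eq_right (by linarith), max_eq_right (by linarith)] at h
    simp at h
  · intro h
    have h1 : 0 < max (dist x x₀ - r / 8) 0 := lt_max_of_lt_left (by linarith)
    unfold psi; positivity

lemma psi_ge {N : ℕ} (x₀ : EuclideanSpace ℝ (Fin N)) (r β K : ℝ) (hr : 0 < r) (hβ : 0 < β) (hK : 0 ≤ K)
    (w : EuclideanSpace ℝ (Fin N) → ℝ) (hw : ∀ x y, |w x - w y| ≤ K * dist x y)
    (hs : ∀ y ∈ closedBall x₀ (r / 4), w y ≤ β * r)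
    (x : EuclideanSpace ℝ (Fin N)) (hx : r / 4 ≤ dist x x₀) : w x ≤ psi x₀ r β K x := by
  have hd : 0 < dist x x₀ := by linarith
  set y := x₀ + ((r / 4) / dist x x₀) • (x - x₀) with hy
  have e1 : dist y x₀ = r / 4 := by
    rw [hy, dist_eq_norm, add_sub_cancel_left, norm_smul, ← dist_eq_norm, Real.norm_of_nonneg (by positivity)]
    field_simp
  have e2 : dist x y = dist x x₀ - r / 4 := by
    have : x - y = (1 - (r / 4) / dist x x₀) • (x - x₀) := by
      rw [hy, sub_smul, one_smul]; abel
    have h3 : 0 ≤ 1 - (r / 4) / dist x x₀ := by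
      rw [sub_nonneg, div_le_one hd]; exact hx
    rw [dist_eq_norm x y, this, norm_smul, Real.norm_of_nonneg h3, ← dist_eq_norm]
    field_simp
  have h1 := hs y (by rw [mem_closedBall, e1])
  have h2 := (abs_le.1 (hw x y)).2
  rw [e2] at h2
  unfold psi
  rw [max_eq_left (by linarith), max_eq_left (by linarith)]
  nlinarith

open Filter Topology in
lemma grad_compare {N : ℕ} (x₀ : EuclideanSpace ℝ (Fin N)) (r β : ℝ) (K : NNReal) (hr : 0 < r) (hβ : 0 < β)
    (w : EuclideanSpace ℝ (Fin N) → ℝ) (hw : LipschitzWith K w)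
    (hs : ∀ y ∈ closedBall x₀ (r / 4), w y ≤ β * r) :
    ∀ᵐ x : EuclideanSpace ℝ (Fin N),
      (‖fderiv ℝ (fun x => min (w x) (psi x₀ r β K x)) x‖ ^ 2 ≤ ‖fderiv ℝ w x‖ ^ 2
        + (closedBall x₀ (r / 4)).indicator (fun _ => 64 * β ^ 2) x) ∧
      (‖fderiv ℝ w x‖ ^ 2 ≤ ‖fderiv ℝ (fun x => min (w x) (psi x₀ r β K x)) x‖ ^ 2
        + (closedBall x₀ (r / 4)).indicator (fun _ => (K : ℝ) ^ 2) x) := by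
  obtain ⟨C, hC⟩ := psi_lip x₀ r β K hβ.le K.2
  have hw1 := hw.min hC
  filter_upwards [hw.ae_differentiableAt, hw1.ae_differentiableAt] with x a b
  rcases le_or_gt (w x) (psi x₀ r β K x) with h | h
  · have h0 : fderiv ℝ (w - fun x => min (w x) (psi x₀ r β K x)) x = 0 := by
      apply fderiv_zero_of_zero
      · intro y; simp
      · simp [h]
    rw [fderiv_sub a b, sub_eq_zero] at h0
    rw [← h0]
    constructor
    · have : 0 ≤ (closedBall x₀ (r / 4)).indicator (fun _ => 64 * β ^ 2) x :=
        indicator_nonneg (fun _ _ => by positivity) x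
      linarith
    · have : 0 ≤ (closedBall x₀ (r / 4)).indicator (fun _ => (K : ℝ) ^ 2) x :=
        indicator_nonneg (fun _ _ => by positivity) x
      linarith
  · have hx : dist x x₀ < r / 4 := by
      by_contra hcon
      push Not at hcon
      have := psi_ge x₀ r β K hr hβ K.2 w (fun x y => by simpa [Real.dist_eq] using hw.dist_le_mul x y) hs x hcon
      linarith
    have hxm : x ∈ closedBall x₀ (r / 4) := hx.le
    rw [indicator_of_mem hxm, indicator_of_mem hxm]
    have hD : ‖fderiv ℝ w x‖ ≤ K := norm_fderiv_le_of_lipschitz ℝ hw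
    have heq : (fun x => min (w x) (psi x₀ r β K x)) =ᶠ[𝓝 x]
        fun x => 8 * β * max (dist x x₀ - r / 8) 0 := by
      have o1 : ∀ᶠ y in 𝓝 x, psi x₀ r β K y < w y :=
        (isOpen_lt hC.continuous hw.continuous).mem_nhds h
      filter_upwards [o1, isOpen_ball.mem_nhds (mem_ball.2 hx)] with y h1 h2
      rw [min_eq_right h1.le]
      unfold psi
      rw [mem_ball] at h2
      rw [max_eq_right (a := dist y x₀ - r / 4) (by linarith)]
      simp
    have hD1 : ‖fderiv ℝ (fun x => min (w x) (psi x₀ r β K x)) x‖ ≤ 8 * β := by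
      rw [heq.fderiv_eq]
      have := norm_fderiv_le_of_lipschitz ℝ (cut_lip x₀ (8 * β) (r / 8) (by positivity)) (x₀ := x)
      rwa [Real.coe_toNNReal _ (by positivity)] at this
    constructor
    · have : ‖fderiv ℝ (fun x => min (w x) (psi x₀ r β K x)) x‖ ^ 2 ≤ (8 * β) ^ 2 := by gcongr
      nlinarith [sq_nonneg ‖fderiv ℝ w x‖]
    · have : ‖fderiv ℝ w x‖ ^ 2 ≤ (K : ℝ) ^ 2 := by gcongr
      nlinarith [sq_nonneg ‖fderiv ℝ (fun x => min (w x) (psi x₀ r β K x)) x‖]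

lemma int_ind {N : ℕ} (S B : Set (EuclideanSpace ℝ (Fin N))) (hS : MeasurableSet S)
    (hSb : Bornology.IsBounded S) (hB : MeasurableSet B) (hBS : B ⊆ S)
    (f g : EuclideanSpace ℝ (Fin N) → ℝ) (c : ℝ) (hf : IntegrableOn f S) (hg : IntegrableOn g S)
    (h : ∀ᵐ x : EuclideanSpace ℝ (Fin N), f x ≤ g x + B.indicator (fun _ => c) x) :
    ∫ x in S, f x ≤ (∫ x in S, g x) + c * volume.real B := by
  have hi : IntegrableOn (B.indicator (fun _ => c)) S :=
    (integrableOn_const (hSb.measure_lt_top.ne)).indicator hB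
  have h1 := setIntegral_mono_on_ae hf (hg.add hi) hS (h.mono fun x hx _ => hx)
  refine h1.trans (le_of_eq ?_)
  have : ∫ x in S, (g + B.indicator (fun _ => c)) x = ∫ x in S, (g x + B.indicator (fun _ => c) x) := rfl
  rw [this, integral_add hg hi, setIntegral_indicator hB, inter_eq_right.2 hBS]
  simp [mul_comm]

set_option maxHeartbeats 2000000 in
theorem stmt_5 {N : ℕ} (hN : 2 ≤ N) (Ω : Set (EuclideanSpace ℝ (Fin N)))
    (hΩo : IsOpen Ω) (hΩb : Bornology.IsBounded Ω) (p : ℝ) (hp : 2 < p)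
    (u : EuclideanSpace ℝ (Fin N) → ℝ) (L : NNReal) (hu : LipschitzWith L u)
    (hcl : closure {x | 1 < u x} ⊆ Ω)
    (hC2 : ContDiffOn ℝ 2 u {x | 1 < u x})
    (heq : ∀ x, 1 < u x → -lap u x = (u x - 1) ^ (p - 1))
    (hNehari : ∫ x in Ω ∩ {x | 1 < u x}, ‖gradient u x‖ ^ 2
      = ∫ x in Ω ∩ {x | 1 < u x}, (u x - 1) ^ p)
    (hNpos : 0 < ∫ x in Ω ∩ {x | 1 < u x}, (u x - 1) ^ p)
    (hmin : ∀ v : EuclideanSpace ℝ (Fin N) → ℝ,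
      (∃ L' : NNReal, LipschitzWith L' v) →
      (∀ x, u x ≤ 1 → v x = u x) →
      {x | 1 < v x} ⊆ {x | 1 < u x} →
      (∫ x in Ω ∩ {x | 1 < v x}, ‖gradient v x‖ ^ 2
        = ∫ x in Ω ∩ {x | 1 < v x}, (v x - 1) ^ p) →
      (0 < ∫ x in Ω ∩ {x | 1 < v x}, (v x - 1) ^ p) →
      J Ω p u ≤ J Ω p v) :
    ∃ r₀ > (0 : ℝ), ∃ c > (0 : ℝ), ∀ x₀, 1 < u x₀ →
      Metric.infDist x₀ {x | u x ≤ 1} ≤ r₀ →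
      1 + c * Metric.infDist x₀ {x | u x ≤ 1} ≤ u x₀ := by
  have hSΩ : {x | 1 < u x} ⊆ Ω := subset_closure.trans hcl
  have hSb : Bornology.IsBounded {x | 1 < u x} := hΩb.subset hSΩ
  have hSo : IsOpen {x | 1 < u x} := isOpen_lt continuous_const hu.continuous
  have hSm := hSo.measurableSet
  -- the positive part
  set w : EuclideanSpace ℝ (Fin N) → ℝ := fun x => max (u x - 1) 0 with hwdef
  set K : NNReal := L + 1 with hKdef
  have hKpos : 0 < (K : ℝ) := by rw [hKdef]; push_cast; positivity
  have huK : LipschitzWith K u := hu.weaken (by rw [hKdef]; exact le_self_add)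
  have hwK : LipschitzWith K w := by
    refine LipschitzWith.of_dist_le_mul fun x y => ?_
    have h1 := abs_max_sub_max_le_abs (u x - 1) (u y - 1) 0
    have h2 := huK.dist_le_mul x y
    rw [Real.dist_eq] at h2 ⊢
    refine h1.trans ?_
    simpa using h2
  have hw0 : ∀ x, 0 ≤ w x := fun x => le_max_right _ _
  have hself : compf u 1 w = u := compf_self u
  obtain ⟨n1, n2⟩ := compf_N Ω p hp u hu.continuous hSΩ 1 one_pos w hwK.continuous hw0 (fun x => le_rfl)
  have jU := compf_J Ω hΩo hΩb p hp u L hu hSΩ 1 one_pos w K hwK hw0 (fun x => le_rfl)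
  rw [hself] at n1 n2 jU
  simp only [one_pow, Real.one_rpow, one_mul, mul_one] at n1 n2 jU
  set A : ℝ := ∫ x in {x | 1 < u x}, ‖fderiv ℝ w x‖ ^ 2 with hAdef
  have hBA : ∫ x in {x | 1 < u x}, (w x) ^ p = A := by rw [← n2, ← n1, hNehari]
  have hA : 0 < A := by rw [← hBA, ← n2]; exact hNpos
  rw [hBA] at jU
  have hWset : {x | 0 < w x} = {x | 1 < u x} := by
    ext x; simp [hwdef]
  rw [hWset] at jU
  -- constants
  obtain ⟨s₀, hs₀, hs₀', C, hC, hnum⟩ := num_main p hp A hA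
  set κ : ℝ := volume.real (ball (0 : EuclideanSpace ℝ (Fin N)) 1) with hκdef
  have hκ : 0 < κ := by
    rw [hκdef, measureReal_def]
    exact ENNReal.toReal_pos (measure_ball_pos _ _ one_pos).ne' measure_ball_lt_top.ne
  have hvol : ∀ (x : EuclideanSpace ℝ (Fin N)) (ρ : ℝ), 0 ≤ ρ → volume.real (closedBall x ρ) = ρ ^ N * κ := by
    intro x ρ hρ
    have := Measure.addHaar_real_closedBall (volume : Measure (EuclideanSpace ℝ (Fin N))) x hρ
    simpa using this
  set β : ℝ := 1 / (1 + 64 * C * 2 ^ N) with hβdef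
  have hβ : 0 < β := by positivity
  have hβ1 : β ≤ 1 := by
    rw [hβdef, div_le_one (by positivity)]
    have : 0 < 64 * C * 2 ^ N := by positivity
    linarith
  have hβC : 64 * C * 2 ^ N * β < 1 := by
    rw [hβdef, mul_one_div, div_lt_one (by positivity)]
    linarith
  have hNpos' : (0 : ℝ) < N := by
    have : 0 < N := by omega
    exact_mod_cast this
  refine ⟨min 1 (min (s₀ * A / (64 * κ)) (A / (2 * K ^ 2 * κ))), by positivity,
    (β / 2) * (Real.exp (-(2 * N * (K : ℝ) ^ 2 / β ^ 2) / 16) - Real.exp (-(2 * N * (K : ℝ) ^ 2 / β ^ 2) / 4)),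
    ?_, ?_⟩
  · have h1 : 0 < 2 * N * (K : ℝ) ^ 2 / β ^ 2 := by positivity
    have h2 : Real.exp (-(2 * N * (K : ℝ) ^ 2 / β ^ 2) / 4) < Real.exp (-(2 * N * (K : ℝ) ^ 2 / β ^ 2) / 16) := by
      apply Real.exp_lt_exp.2; linarith
    have h3 := sub_pos.2 h2
    positivity
  intro x₀ hx₀ hr₀
  set r := Metric.infDist x₀ {x | u x ≤ 1} with hrdef
  rcases (Metric.infDist_nonneg (x := x₀) (s := {x | u x ≤ 1})).eq_or_lt with h0 | hr
  · rw [hrdef, ← h0]; linarith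
  rw [← hrdef] at hr
  have hr1 : r ≤ 1 := hr₀.trans (min_le_left _ _)
  have hr2 : r ≤ s₀ * A / (64 * κ) := hr₀.trans ((min_le_right _ _).trans (min_le_left _ _))
  have hr3 : r ≤ A / (2 * K ^ 2 * κ) := hr₀.trans ((min_le_right _ _).trans (min_le_right _ _))
  have hball : ∀ x, dist x x₀ < r → 1 < u x := by
    intro x hx
    by_contra hcon
    have : r ≤ dist x₀ x := Metric.infDist_le_dist_of_mem (not_lt.1 hcon)
    rw [dist_comm] at this
    linarith
  by_cases hex : ∃ y, dist y x₀ ≤ r / 4 ∧ β * r ≤ u y - 1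
  · obtain ⟨y, hy1, hy2⟩ := hex
    have := lower_bound hN p u K hKpos (fun x y => by simpa [Real.dist_eq] using huK.dist_le_mul x y)
      hu.continuous hC2 heq x₀ y r β hr hβ hball hy1 hy2
    linarith
  exfalso
  push Not at hex
  have hs : ∀ y ∈ closedBall x₀ (r / 4), w y ≤ β * r := fun y hy =>
    max_le (hex y hy).le (by positivity)
  -- the competitor
  obtain ⟨Cψ, hCψ⟩ := psi_lip x₀ r β K hβ.le K.2
  set w₁ : EuclideanSpace ℝ (Fin N) → ℝ := fun x => min (w x) (psi x₀ r β K x) with hw₁def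
  have hw₁L : LipschitzWith (max K Cψ) w₁ := hwK.min hCψ
  have hw₁0 : ∀ x, 0 ≤ w₁ x := fun x => le_min (hw0 x) (psi_nonneg x₀ r β K hβ.le K.2 x)
  have hw₁1 : ∀ x, w₁ x ≤ max (u x - 1) 0 := fun x => min_le_left _ _
  have hB4S : closedBall x₀ (r / 4) ⊆ {x | 1 < u x} := fun x hx =>
    hball x (lt_of_le_of_lt hx (by linarith))
  have hB8S : closedBall x₀ (r / 8) ⊆ {x | 1 < u x} := fun x hx =>
    hball x (lt_of_le_of_lt hx (by linarith))
  set μ : ℝ := volume.real (closedBall x₀ (r / 4)) with hμdef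
  have hμ : μ = (r / 4) ^ N * κ := hvol x₀ (r / 4) (by positivity)
  have hμpos : 0 < μ := by rw [hμ]; positivity
  have hμr : μ ≤ r * κ := by
    rw [hμ]
    have h1 : (r / 4) ^ N ≤ (r / 4) ^ 1 := pow_le_pow_of_le_one (by positivity) (by linarith) (by omega)
    rw [pow_one] at h1
    have : (r / 4) ^ N ≤ r := by linarith
    gcongr
  have hμ8 : volume.real (closedBall x₀ (r / 8)) * 2 ^ N = μ := by
    rw [hvol x₀ (r / 8) (by positivity), hμ, mul_right_comm, ← mul_pow]
    congr 2; ring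
  have hg := grad_compare x₀ r β K hr hβ w hwK hs
  have iw := int_fderiv w K hwK _ hSb
  have iw₁ := int_fderiv w₁ _ hw₁L _ hSb
  have ip := int_pow w hwK.continuous p (by linarith) _ hSb
  have ip₁ := int_pow w₁ hw₁L.continuous p (by linarith) _ hSb
  set A₁ : ℝ := ∫ x in {x | 1 < u x}, ‖fderiv ℝ w₁ x‖ ^ 2 with hA₁def
  set B₁ : ℝ := ∫ x in {x | 1 < u x}, (w₁ x) ^ p with hB₁def
  have hA₁le : A₁ ≤ A + 64 * β ^ 2 * μ :=
    int_ind _ _ hSm hSb measurableSet_closedBall hB4S _ _ _ iw₁ iw (hg.mono fun x hx => hx.1)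
  have hA₁ge : A ≤ A₁ + (K : ℝ) ^ 2 * μ :=
    int_ind _ _ hSm hSb measurableSet_closedBall hB4S _ _ _ iw iw₁ (hg.mono fun x hx => hx.2)
  have hB₁ge : A ≤ B₁ + β ^ 2 * μ := by
    rw [← hBA]
    refine int_ind _ _ hSm hSb measurableSet_closedBall hB4S _ _ _ ip ip₁ (Filter.Eventually.of_forall fun x => ?_)
    by_cases hx : x ∈ closedBall x₀ (r / 4)
    · rw [indicator_of_mem hx]
      have h1 : w x ≤ β := (hs x hx).trans (mul_le_of_le_one_right hβ.le hr1)
      have h2 : (w x) ^ p ≤ β ^ p := Real.rpow_le_rpow (hw0 x) h1 (by linarith)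
      have h3 : β ^ p ≤ β ^ (2 : ℝ) := Real.rpow_le_rpow_of_exponent_ge hβ hβ1 hp.le
      rw [Real.rpow_two] at h3
      have h4 : 0 ≤ (w₁ x) ^ p := Real.rpow_nonneg (hw₁0 x) _
      linarith
    · rw [indicator_of_notMem hx]
      have h1 : w x ≤ psi x₀ r β K x := psi_ge x₀ r β K hr hβ K.2 w
        (fun x y => by simpa [Real.dist_eq] using hwK.dist_le_mul x y) hs x
        (by rw [mem_closedBall, not_le] at hx; exact hx.le)
      have : w₁ x = w x := min_eq_left h1
      rw [this]; simp
  -- numerics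
  set s : ℝ := 64 * β ^ 2 * μ / A with hsdef
  have hsA : A * s = 64 * β ^ 2 * μ := by rw [hsdef]; field_simp
  have hs0 : 0 ≤ s := by positivity
  have hβ2 : β ^ 2 ≤ 1 := pow_le_one₀ hβ.le hβ1
  have hss : s ≤ s₀ := by
    rw [hsdef, div_le_iff₀ hA]
    have h1 : r * (64 * κ) ≤ s₀ * A := (le_div_iff₀ (by positivity)).1 hr2
    have h2 : 64 * β ^ 2 * μ ≤ 64 * 1 * μ := by gcongr
    linarith
  have hA₁pos : 0 < A₁ := by
    have h1 : r * (2 * K ^ 2 * κ) ≤ A := (le_div_iff₀ (by positivity)).1 hr3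
    have h2 : (K : ℝ) ^ 2 * μ ≤ (K : ℝ) ^ 2 * (r * κ) := by gcongr
    linarith
  obtain ⟨hB₁pos, t, ht, ht1, ht2⟩ := hnum s A₁ B₁ hs0 hss hA₁pos (by rw [mul_add, hsA]; linarith)
    (by
      rw [mul_sub, hsA]
      have : 0 ≤ β ^ 2 * μ := by positivity
      linarith)
  obtain ⟨m1, m2⟩ := compf_N Ω p hp u hu.continuous hSΩ t ht w₁ hw₁L.continuous hw₁0 hw₁1
  have jV := compf_J Ω hΩo hΩb p hp u L hu hSΩ t ht w₁ _ hw₁L hw₁0 hw₁1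
  have hW₁set : {x | 0 < w₁ x} = {x | 1 < u x} \ closedBall x₀ (r / 8) := by
    ext x
    have e1 : 0 < w₁ x ↔ 0 < w x ∧ 0 < psi x₀ r β K x := lt_min_iff
    have e2 : 0 < w x ↔ 1 < u x := by simp [hwdef]
    have e3 := psi_pos x₀ r β K hr hβ K.2 x
    exact e1.trans (and_congr e2 e3)
  have hV : volume.real ({x | 1 < u x} \ closedBall x₀ (r / 8))
      = volume.real {x | 1 < u x} - volume.real (closedBall x₀ (r / 8)) :=
    measureReal_sdiff hB8S measurableSet_closedBall hSb.measure_lt_top.ne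
  have hle := hmin (compf u t w₁) (compf_lip u L hu t w₁ _ hw₁L)
    (fun x hx => (compf_of_le u t w₁ x hx (hw₁0 x) (hw₁1 x)).1)
    (fun x hx => pos_imp u w₁ hw₁1 x ((compf_set u t ht w₁ hw₁0 hw₁1 x).1 hx))
    (by rw [m1, m2]; exact ht1)
    (by rw [m2]; exact mul_pos (Real.rpow_pos_of_pos ht p) hB₁pos)
  rw [jU, jV, hW₁set, hV] at hle
  have ht1' : 1 / p * t ^ p * B₁ = 1 / p * (t ^ 2 * A₁) := by rw [ht1]; ring
  rw [ht1'] at hle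
  set θ : ℝ := 1 / 2 - 1 / p with hθ
  have hθpos : 0 < θ := by
    rw [hθ, sub_pos]; exact one_div_lt_one_div_of_lt two_pos hp
  have hθ1 : θ ≤ 1 := by
    have : 0 < 1 / p := by positivity
    rw [hθ]; linarith
  have hfin : volume.real (closedBall x₀ (r / 8)) ≤ θ * (t ^ 2 * A₁ - A) := by
    rw [hθ]; linarith
  have h5 : θ * (t ^ 2 * A₁ - A) ≤ 64 * C * β * μ := by
    have h6 : t ^ 2 * A₁ - A ≤ C * (64 * β ^ 2 * μ) := by
      rw [← hsA]; linarith
    have h7 : 0 ≤ C * (64 * β ^ 2 * μ) := by positivity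
    calc θ * (t ^ 2 * A₁ - A) ≤ θ * (C * (64 * β ^ 2 * μ)) := by gcongr
      _ ≤ 1 * (C * (64 * β ^ 2 * μ)) := by gcongr
      _ = 64 * C * β * μ * β := by ring
      _ ≤ 64 * C * β * μ * 1 := by gcongr
      _ = _ := by ring
  have h8 : μ ≤ (64 * C * β * μ) * 2 ^ N := by
    rw [← hμ8]
    have := hfin.trans h5
    rw [← hμ8] at this
    gcongr
  have h9 : (64 * C * β * μ) * 2 ^ N = (64 * C * 2 ^ N * β) * μ := by ring
  rw [h9] at h8
  have h10 : (64 * C * 2 ^ N * β) * μ < 1 * μ := by gcongr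
  linarith
end

section
/- Let N ≥ 2, let Ω ⊂ ℝ^N be a bounded open set, and let p satisfy 2 < p < 2N/(N−2) if N ≥ 3 and 2 < p < ∞ if N = 2. Let β : ℝ → ℝ be continuous with β(s) ≥ 0 for all s, and let K > 0. Then there exists a constant C > 0 such that for every ε ∈ (0,1] and every function u that is Lipschitz on the closure of Ω, twice continuously differentiable on Ω, vanishes on the boundary ∂Ω, satisfies Δu(x) = (1/ε)β((u(x)−1)/ε) − (u(x)−1)_+^{p−1} for all x ∈ Ω, and satisfies ∫_Ω |∇u|² dx ≤ K, one has u(x) ≤ C for all x ∈ Ω. -/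
open MeasureTheory Metric Set

/-- Compactly supported radial potential. -/
noncomputable def hker {N : ℕ} (y : EuclideanSpace ℝ (Fin N)) : ℝ := (max (1 - ‖y‖ ^ 2) 0) ^ 3

/-- Compactly supported radial averaging kernel. -/
noncomputable def eker {N : ℕ} (y : EuclideanSpace ℝ (Fin N)) : ℝ := 6 * (max (1 - ‖y‖ ^ 2) 0) ^ 2

theorem hasDerivAt_maxcube (t : ℝ) :
    HasDerivAt (fun s : ℝ => (max s 0) ^ 3) (3 * (max t 0) ^ 2) t := by
  rcases lt_trichotomy t 0 with h | h | h
  · have : (fun s : ℝ => (max s 0) ^ 3) =ᶠ[nhds t] fun _ => 0 := by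
      filter_upwards [gt_mem_nhds h] with s hs
      simp [max_eq_right hs.le]
    rw [max_eq_right h.le]
    simpa using (hasDerivAt_const t (0:ℝ)).congr_of_eventuallyEq this
  · subst h
    rw [hasDerivAt_iff_isLittleO]
    simp only [max_self, sub_zero, smul_eq_mul]
    have h1 : (fun x : ℝ => max x 0 ^ 3) =O[nhds 0] fun x : ℝ => x ^ 3 := by
      apply Asymptotics.IsBigO.of_bound 1
      filter_upwards with x
      rw [norm_pow, norm_pow, one_mul]
      gcongr
      rw [Real.norm_eq_abs, Real.norm_eq_abs, abs_of_nonneg (le_max_right _ _)]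
      exact max_le (le_abs_self x) (abs_nonneg x)
    have h2 : (fun x : ℝ => x ^ 3) =o[nhds 0] fun x : ℝ => x :=
      Asymptotics.isLittleO_pow_id (by norm_num)
    simpa using h1.trans_isLittleO h2
  · have : (fun s : ℝ => (max s 0) ^ 3) =ᶠ[nhds t] fun s => s ^ 3 := by
      filter_upwards [lt_mem_nhds h] with s hs
      simp [max_eq_left hs.le]
    rw [max_eq_left h.le]
    simpa using (hasDerivAt_pow 3 t).congr_of_eventuallyEq this

section kernel

variable {N : ℕ}

theorem hker_hasFDerivAt (y : EuclideanSpace ℝ (Fin N)) :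
    HasFDerivAt (hker (N := N)) (-(eker y) • innerSL ℝ y) y := by
  have h1 : HasFDerivAt (fun z : EuclideanSpace ℝ (Fin N) => 1 - ‖z‖ ^ 2)
      (-(2 • innerSL ℝ y)) y := by
    exact (hasStrictFDerivAt_norm_sq y).hasFDerivAt.const_sub 1
  have h2 := (hasDerivAt_maxcube (1 - ‖y‖ ^ 2)).comp_hasFDerivAt y h1
  refine h2.congr_fderiv ?_
  ext v
  simp [eker]
  ring

theorem eker_continuous : Continuous (eker (N := N)) := by
  unfold eker; fun_prop

theorem hker_continuous : Continuous (hker (N := N)) := by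
  unfold hker; fun_prop

theorem eker_nonneg (y : EuclideanSpace ℝ (Fin N)) : 0 ≤ eker y := by
  unfold eker; positivity

theorem hker_nonneg (y : EuclideanSpace ℝ (Fin N)) : 0 ≤ hker y := by
  unfold hker; positivity

theorem eker_le (y : EuclideanSpace ℝ (Fin N)) : eker y ≤ 6 := by
  unfold eker
  have h1 : max (1 - ‖y‖ ^ 2) 0 ≤ 1 := max_le (by nlinarith [sq_nonneg ‖y‖]) (by norm_num)
  have h0 : 0 ≤ max (1 - ‖y‖ ^ 2) 0 := le_max_right _ _
  nlinarith

theorem ker_zero {y : EuclideanSpace ℝ (Fin N)} (hy : y ∉ closedBall (0 : EuclideanSpace ℝ (Fin N)) 1) :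
    max (1 - ‖y‖ ^ 2) 0 = 0 := by
  have : 1 < ‖y‖ := by simpa using hy
  exact max_eq_right (by nlinarith)

theorem eker_supp : HasCompactSupport (eker (N := N)) :=
  HasCompactSupport.intro (isCompact_closedBall 0 1) fun y hy => by simp [eker, ker_zero hy]

theorem hker_supp : HasCompactSupport (hker (N := N)) :=
  HasCompactSupport.intro (isCompact_closedBall 0 1) fun y hy => by simp [hker, ker_zero hy]

theorem eker_int_pos : 0 < ∫ y, eker (N := N) y := by
  refine eker_continuous.integral_pos_of_hasCompactSupport_nonneg_nonzero eker_supp eker_nonneg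
    (x := 0) ?_
  simp [eker]

theorem cint {F : EuclideanSpace ℝ (Fin N) → ℝ} (hF : Continuous F) {k : EuclideanSpace ℝ (Fin N) → ℝ}
    (hk : Continuous k) (hs : HasCompactSupport k) : Integrable (fun y => F y * k y) :=
  (hF.mul hk).integrable_of_hasCompactSupport hs.mul_left

theorem avg_hasDerivAt {f : EuclideanSpace ℝ (Fin N) → ℝ} (hf : ContDiff ℝ 2 f)
    (hs : HasCompactSupport f) (x : EuclideanSpace ℝ (Fin N)) (r : ℝ) :
    HasDerivAt (fun r : ℝ => ∫ y, f (x + r • y) * eker y)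
      (∫ y, fderiv ℝ f (x + r • y) y * eker y) r := by
  have hc : Continuous (fderiv ℝ f) := hf.continuous_fderiv (by norm_num)
  obtain ⟨M, hM⟩ := (hs.fderiv (𝕜 := ℝ)).exists_bound_of_continuous hc
  have hcf := hf.continuous
  have hck := eker_continuous (N := N)
  refine (hasDerivAt_integral_of_dominated_loc_of_deriv_le (s := univ)
    (bound := fun y => M * ‖y‖ * eker y)
    (F := fun (r : ℝ) y => f (x + r • y) * eker y)
    (F' := fun (r : ℝ) y => fderiv ℝ f (x + r • y) y * eker y) Filter.univ_mem ?_ ?_ ?_ ?_ ?_ ?_).2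
  · filter_upwards with s
    exact Continuous.aestronglyMeasurable (by fun_prop)
  · exact cint (by fun_prop) eker_continuous eker_supp
  · exact Continuous.aestronglyMeasurable (by fun_prop)
  · filter_upwards with y s _
    rw [norm_mul, Real.norm_of_nonneg (eker_nonneg y)]
    gcongr
    · exact eker_nonneg y
    · exact (ContinuousLinearMap.le_opNorm _ _).trans (by gcongr; exact hM _)
  · exact cint (by fun_prop) eker_continuous eker_supp
  · filter_upwards with y s _
    have h1 : HasDerivAt (fun s : ℝ => x + s • y) y s := by
      simpa using ((hasDerivAt_id s).smul_const y).const_add x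
    have h2 := ((hf.differentiable (by norm_num)) (x + s • y)).hasFDerivAt.comp_hasDerivAt s h1
    exact h2.mul_const _

theorem avg_deriv_eq {f : EuclideanSpace ℝ (Fin N) → ℝ} (hf : ContDiff ℝ 2 f)
    (x : EuclideanSpace ℝ (Fin N)) (r : ℝ) :
    ∫ y, fderiv ℝ f (x + r • y) y * eker y = r * ∫ y, lap f (x + r • y) * hker y := by
  have hc : Continuous (fderiv ℝ f) := hf.continuous_fderiv (by norm_num)
  have hck := eker_continuous (N := N)
  have hch := hker_continuous (N := N)
  let e : Fin N → EuclideanSpace ℝ (Fin N) := fun i => EuclideanSpace.single i 1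
  have hD : ∀ i, ContDiff ℝ 1 (fun y => fderiv ℝ f y (e i)) := fun i =>
    (hf.fderiv_right (m := 1) (by norm_num)).clm_apply contDiff_const
  have hDc : ∀ i, Continuous (fun y => fderiv ℝ (fun y => fderiv ℝ f y (e i)) y (e i)) := fun i =>
    ((hD i).continuous_fderiv (by norm_num)).clm_apply continuous_const
  have hy : ∀ y : EuclideanSpace ℝ (Fin N), y = ∑ i, y i • e i := by
    intro y
    ext j
    simp [e, Pi.single_apply]
  have hkd : ∀ (y : EuclideanSpace ℝ (Fin N)) i, fderiv ℝ hker y (e i) = - (eker y * y i) := by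
    intro y i
    rw [(hker_hasFDerivAt y).fderiv]
    have : inner ℝ y (e i) = y i := by simp [e, EuclideanSpace.inner_single_right]
    simp [this]
  have hF : ∀ i (y : EuclideanSpace ℝ (Fin N)),
      HasFDerivAt (fun y => fderiv ℝ f (x + r • y) (e i))
        (r • fderiv ℝ (fun y => fderiv ℝ f y (e i)) (x + r • y)) y := by
    intro i y
    have h1 : HasFDerivAt (fun y : EuclideanSpace ℝ (Fin N) => x + r • y)
        (r • ContinuousLinearMap.id ℝ _) y := ((hasFDerivAt_id y).const_smul r).const_add x
    have h2 := (((hD i).differentiable (by norm_num)) (x + r • y)).hasFDerivAt.comp y h1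
    refine h2.congr_fderiv ?_
    ext v
    simp
  have key : ∀ i, ∫ y, fderiv ℝ f (x + r • y) (e i) * (y i * eker y) =
      r * ∫ y, fderiv ℝ (fun y => fderiv ℝ f y (e i)) (x + r • y) (e i) * hker y := by
    intro i
    have := integral_mul_fderiv_eq_neg_fderiv_mul_of_integrable (μ := volume)
      (f := fun y => fderiv ℝ f (x + r • y) (e i)) (g := hker) (v := e i) ?_ ?_ ?_ ?_ ?_
    · simp only [hkd, (hF i _).fderiv] at this
      calc ∫ y, fderiv ℝ f (x + r • y) (e i) * (y i * eker y)
          = - ∫ y, fderiv ℝ f (x + r • y) (e i) * (-(eker y * y i)) := by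
            rw [← integral_neg]; congr 1; ext y; ring
        _ = _ := by
            rw [this, neg_neg, ← integral_const_mul]
            congr 1; ext y; simp [mul_assoc]
    · simp only [(hF i _).fderiv]
      refine cint ?_ hch hker_supp
      have := hDc i
      simp only [smul_apply]
      fun_prop
    · simp only [hkd]
      have : (fun y : EuclideanSpace ℝ (Fin N) => fderiv ℝ f (x + r • y) (e i) * -(eker y * y i))
        = fun y => (fderiv ℝ f (x + r • y) (e i) * - y i) * eker y := by ext y; ring
      rw [this]
      exact cint (by fun_prop) hck eker_supp
    · exact cint (by fun_prop) hch hker_supp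
    · exact fun y _ => (hF i y).differentiableAt
    · exact fun y _ => (hker_hasFDerivAt y).differentiableAt
  have e1 : ∀ y, fderiv ℝ f (x + r • y) y * eker y
      = ∑ i, fderiv ℝ f (x + r • y) (e i) * (y i * eker y) := by
    intro y
    conv_lhs => rw [show fderiv ℝ f (x + r • y) y = fderiv ℝ f (x + r • y) (∑ i, y i • e i) by
      rw [← hy y]]
    rw [map_sum, Finset.sum_mul]
    refine Finset.sum_congr rfl fun i _ => ?_
    simp; ring
  simp only [e1]
  rw [integral_finsetSum]
  · simp only [key, lap, Finset.sum_mul]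
    rw [integral_finsetSum, Finset.mul_sum]
    intro i _
    refine cint ?_ hch hker_supp
    exact (hDc i).comp (by fun_prop)
  · intro i _
    have : (fun y : EuclideanSpace ℝ (Fin N) => fderiv ℝ f (x + r • y) (e i) * (y i * eker y))
        = fun y => (fderiv ℝ f (x + r • y) (e i) * y i) * eker y := by ext y; ring
    rw [this]
    exact cint (by fun_prop) hck eker_supp

theorem mean_value {f : EuclideanSpace ℝ (Fin N) → ℝ} (hf : ContDiff ℝ 2 f)
    (hs : HasCompactSupport f) (m : ℝ) (hm : ∀ x, -m ≤ lap f x)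
    (x : EuclideanSpace ℝ (Fin N)) (R : ℝ) (hR : 0 ≤ R) :
    (∫ y, eker (N := N) y) * f x ≤
      (∫ y, f (x + R • y) * eker y) + R ^ 2 / 2 * (m * ∫ y, hker (N := N) y) := by
  set I := ∫ y, hker (N := N) y
  have hd : ∀ r : ℝ, HasDerivAt (fun r : ℝ => (∫ y, f (x + r • y) * eker y) + r ^ 2 / 2 * (m * I))
      (r * (∫ y, lap f (x + r • y) * hker y) + r * (m * I)) r := by
    intro r
    have h1 := avg_hasDerivAt hf hs x r
    rw [avg_deriv_eq hf] at h1
    refine h1.add ?_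
    have := ((hasDerivAt_pow 2 r).div_const 2).mul_const (m * I)
    refine this.congr_deriv ?_
    simp
  have hlc : Continuous (lap f) := by
    unfold lap
    refine continuous_finsetSum _ fun i _ => ?_
    exact (((hf.fderiv_right (m := 1) (by norm_num)).clm_apply contDiff_const).continuous_fderiv
      (by norm_num)).clm_apply continuous_const
  have hmono : MonotoneOn (fun r : ℝ => (∫ y, f (x + r • y) * eker y) + r ^ 2 / 2 * (m * I))
      (Ici 0) := by
    refine monotoneOn_of_deriv_nonneg (convex_Ici 0)
      (fun r _ => (hd r).continuousAt.continuousWithinAt)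
      (fun r _ => (hd r).differentiableAt.differentiableWithinAt) ?_
    intro r hr
    rw [interior_Ici] at hr
    rw [(hd r).deriv, ← mul_add]
    refine mul_nonneg (le_of_lt hr) ?_
    have : ∫ y, (-m) * hker (N := N) y ≤ ∫ y, lap f (x + r • y) * hker y := by
      refine integral_mono (cint continuous_const hker_continuous hker_supp)
        (cint (hlc.comp (by fun_prop)) hker_continuous hker_supp) fun y => ?_
      exact mul_le_mul_of_nonneg_right (hm _) (hker_nonneg y)
    rw [integral_const_mul] at this
    linarith
  have := hmono (mem_Ici.2 le_rfl) (mem_Ici.2 hR) hR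
  simp only [zero_smul, add_zero, integral_const_mul] at this
  linarith

end kernel

/-- A smooth convex replacement of the positive part. -/
theorem exists_conv : ∃ g g' g'' : ℝ → ℝ, ContDiff ℝ 2 g ∧ (∀ t, HasDerivAt g (g' t) t) ∧
    (∀ t, HasDerivAt g' (g'' t) t) ∧ (∀ t, 0 ≤ g'' t) ∧ (∀ t, 0 ≤ g' t) ∧ (∀ t, g' t ≤ 1) ∧
    (∀ t ≤ 0, g t = 0) ∧ (∀ t ≤ 0, g' t = 0) ∧ (∀ t, t - 1 ≤ g t) ∧ (∀ t, 0 ≤ g t) := by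
  have hsc := Real.smoothTransition.continuous
  have hd : ∀ t, HasDerivAt (fun t => ∫ s in (0:ℝ)..t, Real.smoothTransition s)
      (Real.smoothTransition t) t := fun t =>
    intervalIntegral.integral_hasDerivAt_right (hsc.intervalIntegrable _ _)
      (hsc.stronglyMeasurableAtFilter _ _) hsc.continuousAt
  have h0 : ∀ t ≤ 0, ∫ s in (0:ℝ)..t, Real.smoothTransition s = 0 := by
    intro t ht
    rw [intervalIntegral.integral_symm, neg_eq_zero]
    refine intervalIntegral.integral_zero_ae (Filter.Eventually.of_forall fun s hs => ?_)
    rw [uIoc_of_le ht] at hs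
    exact Real.smoothTransition.zero_of_nonpos hs.2
  have hnn : ∀ t, 0 ≤ ∫ s in (0:ℝ)..t, Real.smoothTransition s := by
    intro t
    rcases le_total t 0 with h | h
    · rw [h0 t h]
    · exact intervalIntegral.integral_nonneg h fun s _ => Real.smoothTransition.nonneg s
  refine ⟨fun t => ∫ s in (0:ℝ)..t, Real.smoothTransition s, Real.smoothTransition,
    deriv Real.smoothTransition, ?_, hd, ?_, ?_, Real.smoothTransition.nonneg,
    Real.smoothTransition.le_one, h0, fun t => Real.smoothTransition.zero_of_nonpos, ?_, hnn⟩
  · rw [show (2 : WithTop ℕ∞) = 1 + 1 by norm_num, contDiff_succ_iff_deriv]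
    refine ⟨fun t => (hd t).differentiableAt, by simp, ?_⟩
    have : deriv (fun t => ∫ s in (0:ℝ)..t, Real.smoothTransition s) = Real.smoothTransition := by
      ext t; exact (hd t).deriv
    rw [this]
    exact Real.smoothTransition.contDiff (n := 1)
  · exact fun t => ((Real.smoothTransition.contDiff (n := 1)).differentiable (by norm_num) t).hasDerivAt
  · exact fun t => Real.smoothTransition.monotone.deriv_nonneg
  · intro t
    rcases le_total t 1 with h | h
    · linarith [hnn t]
    · have h1 : (∫ s in (0:ℝ)..1, Real.smoothTransition s) + ∫ s in (1:ℝ)..t, Real.smoothTransition s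
          = ∫ s in (0:ℝ)..t, Real.smoothTransition s :=
        intervalIntegral.integral_add_adjacent_intervals (hsc.intervalIntegrable _ _)
          (hsc.intervalIntegrable _ _)
      have h2 : ∫ s in (1:ℝ)..t, Real.smoothTransition s = ∫ s in (1:ℝ)..t, (1:ℝ) := by
        refine intervalIntegral.integral_congr fun s hs => ?_
        rw [uIcc_of_le h] at hs
        exact Real.smoothTransition.one_of_one_le hs.1
      simp at h2
      have := hnn 1
      simp only
      linarith

theorem young_pt {s t q : ℝ} (hs : 0 ≤ s) (ht : 0 < t) (hq : 1 ≤ q) :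
    s ≤ t + t ^ (1 - q) * s ^ q := by
  rcases le_total s t with h | h
  · have := Real.rpow_nonneg ht.le (1 - q)
    have := Real.rpow_nonneg hs q
    nlinarith [mul_nonneg ‹0 ≤ t ^ (1-q)› this]
  · have hs' : 0 < s := ht.trans_le h
    have h1 : s ^ (1 - q) ≤ t ^ (1 - q) := Real.rpow_le_rpow_of_nonpos ht h (by linarith)
    have h2 : s ^ (1 - q) * s ^ q = s := by
      rw [← Real.rpow_add hs']; simp
    have := mul_le_mul_of_nonneg_right h1 (Real.rpow_nonneg hs q)
    linarith

theorem algebra_bound (N : ℕ) (p q c0 c1 D : ℝ) (hc0 : 0 < c0) (hc1 : 0 ≤ c1)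
    (hD : 0 ≤ D) (hq : (N : ℝ) * (p - 2) / 2 < q) :
    ∃ C : ℝ, ∀ m : ℝ, 1 ≤ m →
      (∀ R : ℝ, 0 < R → c0 * m ≤ c0 * (m / 4) + (m / 4) ^ (1 - q) * (6 * ((R ^ N)⁻¹ * D))
        + R ^ 2 / 2 * ((2 * m) ^ (p - 1) * c1)) → m ≤ C := by
  set θ := q - (N : ℝ) * (p - 2) / 2 with hθ
  have hθ0 : 0 < θ := by linarith
  set k2 : ℝ := c0 / (4 * 2 ^ (p - 2) * (c1 + 1)) with hk2
  have h2p : (0:ℝ) < 2 ^ (p - 2) := by positivity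
  have hk2p : 0 < k2 := by positivity
  set κ := Real.sqrt k2 with hκ
  have hκ0 : 0 < κ := Real.sqrt_pos.2 hk2p
  have hκ2 : κ ^ 2 = k2 := Real.sq_sqrt hk2p.le
  set B : ℝ := (4 ^ (q - 1) * (6 * ((κ ^ N)⁻¹ * D))) * (2 / c0) with hB
  have hB0 : 0 ≤ B := by positivity
  refine ⟨B ^ (1 / θ), fun m hm h => ?_⟩
  have hm0 : 0 < m := by linarith
  have hR := h (κ * m ^ (-((p - 2) / 2))) (by positivity)
  have e1 : (κ * m ^ (-((p - 2) / 2))) ^ 2 = k2 * m ^ (2 - p) := by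
    rw [mul_pow, hκ2, ← Real.rpow_natCast (m ^ _), ← Real.rpow_mul hm0.le]
    congr 2; push_cast; ring
  have e2 : ((κ * m ^ (-((p - 2) / 2))) ^ N)⁻¹ = (κ ^ N)⁻¹ * m ^ ((N : ℝ) * (p - 2) / 2) := by
    rw [mul_pow, mul_inv, ← Real.rpow_natCast (m ^ _), ← Real.rpow_mul hm0.le,
      ← Real.rpow_neg hm0.le]
    congr 2; ring
  have e3 : (2 * m) ^ (p - 1) = 2 * 2 ^ (p - 2) * (m * m ^ (p - 2)) := by
    rw [Real.mul_rpow (by norm_num) hm0.le]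
    congr 1
    · rw [show p - 1 = 1 + (p - 2) by ring, Real.rpow_add (by norm_num)]; simp
    · rw [show p - 1 = 1 + (p - 2) by ring, Real.rpow_add hm0]; simp
  have e4 : m ^ (2 - p) * m ^ (p - 2) = 1 := by
    rw [← Real.rpow_add hm0]; simp
  have e5 : (m / 4) ^ (1 - q) = m ^ (1 - q) * 4 ^ (q - 1) := by
    rw [Real.div_rpow hm0.le (by norm_num), div_eq_mul_inv, ← Real.rpow_neg (by norm_num)]
    congr 2; ring
  have e6 : m ^ (1 - q) * m ^ ((N : ℝ) * (p - 2) / 2) = m * m ^ (-θ) := by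
    have : m * m ^ (-θ) = m ^ (1 + -θ) := by rw [Real.rpow_add hm0, Real.rpow_one]
    rw [this, ← Real.rpow_add hm0]
    congr 1; rw [hθ]; ring
  rw [e1, e2, e3, e5] at hR
  have f1 : k2 * m ^ (2 - p) / 2 * (2 * 2 ^ (p - 2) * (m * m ^ (p - 2)) * c1)
      = (k2 * 2 ^ (p - 2) * c1) * m := by
    calc _ = (k2 * 2 ^ (p - 2) * c1) * m * (m ^ (2 - p) * m ^ (p - 2)) := by ring
      _ = _ := by rw [e4, mul_one]
  have f2 : k2 * 2 ^ (p - 2) * c1 ≤ c0 / 4 := by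
    have : k2 * 2 ^ (p - 2) * c1 = c0 / 4 * (c1 / (c1 + 1)) := by
      rw [hk2]; field_simp
    rw [this]
    have : c1 / (c1 + 1) ≤ 1 := (div_le_one (by linarith)).2 (by linarith)
    nlinarith
  have f3 : m ^ (1 - q) * 4 ^ (q - 1) * (6 * ((κ ^ N)⁻¹ * m ^ ((N : ℝ) * (p - 2) / 2) * D))
      = (B * (c0 / 2)) * (m * m ^ (-θ)) := by
    rw [← e6, hB]; field_simp
  rw [f1, f3] at hR
  have f4 : c0 / 2 * m ≤ (B * (c0 / 2)) * (m * m ^ (-θ)) := by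
    have := mul_le_mul_of_nonneg_right f2 hm0.le
    linarith
  have f5 : 1 ≤ B * m ^ (-θ) := by
    have : (c0 / 2 * m) * 1 ≤ (c0 / 2 * m) * (B * m ^ (-θ)) := by
      rw [mul_one]; refine f4.trans (le_of_eq ?_); ring
    exact le_of_mul_le_mul_left this (by positivity)
  have f6 : m ^ θ ≤ B := by
    rw [Real.rpow_neg hm0.le, ← div_eq_mul_inv, one_le_div (by positivity)] at f5
    exact f5
  calc m = (m ^ θ) ^ (1 / θ) := by
        rw [← Real.rpow_mul hm0.le, mul_one_div_cancel hθ0.ne', Real.rpow_one]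
    _ ≤ B ^ (1 / θ) := Real.rpow_le_rpow (by positivity) f6 (by positivity)
section sob

open scoped NNReal ENNReal

theorem exists_exponents {N : ℕ} (hN : 2 ≤ N) (p : ℝ) (hp : 2 < p)
    (hpSub : 3 ≤ N → p < 2 * (N : ℝ) / ((N : ℝ) - 2)) :
    ∃ a q : ℝ≥0, 1 ≤ a ∧ a ≤ 2 ∧ a < (N : ℝ≥0) ∧ 1 ≤ q ∧ (N : ℝ) * (p - 2) / 2 < q ∧
      (a : ℝ)⁻¹ - (N : ℝ)⁻¹ ≤ (q : ℝ)⁻¹ := by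
  rcases Nat.lt_or_ge N 3 with h | h
  · obtain rfl : N = 2 := by omega
    have h2 : (1:ℝ) ≤ 2 * p / (p + 2) := by rw [le_div_iff₀ (by linarith)]; linarith
    have h3 : 2 * p / (p + 2) < 2 := by rw [div_lt_iff₀ (by linarith)]; linarith
    refine ⟨⟨2 * p / (p + 2), by linarith⟩, ⟨p, by linarith⟩, ?_, ?_, ?_, ?_, ?_, ?_⟩
    · exact_mod_cast h2
    · exact_mod_cast h3.le
    · exact_mod_cast h3
    · have h4 : (1:ℝ) ≤ p := by linarith
      exact_mod_cast h4
    · change _ < p; push_cast; linarith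
    · change (2 * p / (p + 2))⁻¹ - ((2:ℕ):ℝ)⁻¹ ≤ p⁻¹
      apply le_of_eq; push_cast; field_simp; ring
  · have hp' := hpSub h
    have hN' : (3:ℝ) ≤ N := by exact_mod_cast h
    have hq : (1:ℝ) ≤ 2 * N / (N - 2) := by rw [le_div_iff₀ (by linarith)]; linarith
    refine ⟨2, ⟨2 * N / (N - 2), by linarith⟩, by norm_num, le_rfl, by exact_mod_cast h, ?_, ?_, ?_⟩
    · exact_mod_cast hq
    · change _ < 2 * (N:ℝ) / (N - 2)
      have h1 : p - 2 < 4 / (N - 2) := by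
        have : 2 * (N:ℝ) / (N - 2) - 2 = 4 / (N - 2) := by
          have : (N:ℝ) - 2 ≠ 0 := by linarith
          field_simp; ring
        linarith
      have : 2 * (N:ℝ) / (N - 2) = N * (4 / (N - 2)) / 2 := by ring
      rw [this]
      have : (N:ℝ) * (p - 2) < N * (4 / (N - 2)) := mul_lt_mul_of_pos_left h1 (by linarith)
      linarith
    · change ((2:ℝ≥0):ℝ)⁻¹ - (N:ℝ)⁻¹ ≤ (2 * (N:ℝ) / (N - 2))⁻¹
      apply le_of_eq; push_cast
      have : (N:ℝ) - 2 ≠ 0 := by linarith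
      field_simp

theorem sobolev_bound {N : ℕ} {Ω : Set (EuclideanSpace ℝ (Fin N))} (hN : 2 ≤ N)
    (hΩb : Bornology.IsBounded Ω) (K : ℝ) {a q : ℝ≥0} (ha : 1 ≤ a) (ha2 : a ≤ 2) (haN : a < (N : ℝ≥0))
    (hq : 1 ≤ q) (haq : (a : ℝ)⁻¹ - (N : ℝ)⁻¹ ≤ (q : ℝ)⁻¹) :
    ∃ D : ℝ, 0 ≤ D ∧ ∀ f : EuclideanSpace ℝ (Fin N) → ℝ, ContDiff ℝ 1 f → HasCompactSupport f →
      Function.support f ⊆ Ω → (∀ x, 0 ≤ f x) → ∫ x, ‖fderiv ℝ f x‖ ^ 2 ≤ K →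
      ∫ x, f x ^ (q : ℝ) ≤ D := by
  set A : ℝ≥0∞ := ((eLpNormLESNormFDerivOfLeConst ℝ
    (volume : Measure (EuclideanSpace ℝ (Fin N))) Ω a q : ℝ≥0) : ℝ≥0∞)
  have hcl : (volume : Measure (EuclideanSpace ℝ (Fin N))) (closure Ω) < ∞ :=
    hΩb.closure.measure_lt_top
  set V : ℝ≥0∞ := (volume.restrict (closure Ω) : Measure (EuclideanSpace ℝ (Fin N))) univ ^
    (1 / (a : ℝ≥0∞).toReal - 1 / (2 : ℝ≥0∞).toReal) with hV
  have hVt : V ≠ ∞ := by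
    rw [hV, Measure.restrict_apply_univ]
    refine (ENNReal.rpow_lt_top_of_nonneg ?_ hcl.ne).ne
    simp only [ENNReal.coe_toReal, ENNReal.toReal_ofNat, sub_nonneg]
    have h1 : (1:ℝ) ≤ a := by exact_mod_cast ha
    have h2 : (a:ℝ) ≤ 2 := by exact_mod_cast ha2
    exact one_div_le_one_div_of_le (by linarith) h2
  set X : ℝ := (A * (ENNReal.ofReal (K ^ (1/2:ℝ)) * V)).toReal with hX
  have hq0 : (0:ℝ) < q := by
    have : (1:ℝ) ≤ q := by exact_mod_cast hq
    linarith
  refine ⟨X ^ (q:ℝ), by positivity, fun f hf hs hsup hnn hK => ?_⟩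
  have hfin : A * (ENNReal.ofReal (K ^ (1/2:ℝ)) * V) ≠ ∞ :=
    ENNReal.mul_ne_top ENNReal.coe_ne_top (ENNReal.mul_ne_top ENNReal.ofReal_ne_top hVt)
  have hdc : Continuous (fderiv ℝ f) := hf.continuous_fderiv (by norm_num)
  have h1 : eLpNorm f q volume ≤ A * eLpNorm (fderiv ℝ f) a volume := by
    refine eLpNorm_le_eLpNorm_fderiv_of_le volume hf hsup ha ?_ ?_ hΩb
    · simpa using haN
    · simpa using haq
  have hsd : Function.support (fderiv ℝ f) ⊆ closure Ω :=
    (support_fderiv_subset ℝ).trans (closure_mono hsup)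
  have h2 : eLpNorm (fderiv ℝ f) a volume ≤ eLpNorm (fderiv ℝ f) 2 volume * V := by
    have hr : eLpNorm (fderiv ℝ f) a (volume.restrict (closure Ω)) = eLpNorm (fderiv ℝ f) a volume := by
      have hsd' : Function.support (fun x => ‖fderiv ℝ f x‖) ⊆ closure Ω := fun x hx =>
        hsd (fun h => hx (by simp [h]))
      rw [← eLpNorm_norm, ← eLpNorm_norm (fderiv ℝ f) (μ := volume)]
      exact eLpNorm_restrict_eq_of_support_subset hsd'
    rw [← hr]
    refine (eLpNorm_le_eLpNorm_mul_rpow_measure_univ (q := 2) ?_ hdc.aestronglyMeasurable).trans ?_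
    · exact_mod_cast ha2
    · gcongr
      exact Measure.restrict_le_self
  have h3 : eLpNorm (fderiv ℝ f) 2 volume ≤ ENNReal.ofReal (K ^ (1/2:ℝ)) := by
    have hm : MemLp (fderiv ℝ f) 2 volume := hdc.memLp_of_hasCompactSupport (hs.fderiv (𝕜 := ℝ))
    rw [hm.eLpNorm_eq_integral_rpow_norm (by norm_num) (by norm_num)]
    apply ENNReal.ofReal_le_ofReal
    simp only [ENNReal.toReal_ofNat, Real.rpow_ofNat]
    rw [one_div]
    exact Real.rpow_le_rpow (integral_nonneg fun x => by positivity) hK (by norm_num)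
  have h4 : eLpNorm f q volume ≤ A * (ENNReal.ofReal (K ^ (1/2:ℝ)) * V) :=
    h1.trans (by gcongr; exact h2.trans (by gcongr))
  have hm : MemLp f q volume := hf.continuous.memLp_of_hasCompactSupport hs
  rw [hm.eLpNorm_eq_integral_rpow_norm (by simpa using (zero_lt_one.trans_le hq).ne') (by simp),
    ENNReal.ofReal_le_iff_le_toReal hfin, ENNReal.coe_toReal] at h4
  have h5 : ∫ x, f x ^ (q:ℝ) = ∫ x, ‖f x‖ ^ (q:ℝ) := by
    simp [Real.norm_of_nonneg (hnn _)]
  rw [h5]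
  have h6 : 0 ≤ ∫ x, ‖f x‖ ^ (q:ℝ) := integral_nonneg fun x => by positivity
  calc _ = ((∫ x, ‖f x‖ ^ (q:ℝ)) ^ ((q:ℝ)⁻¹)) ^ (q:ℝ) := by
        rw [← Real.rpow_mul h6, inv_mul_cancel₀ hq0.ne', Real.rpow_one]
    _ ≤ X ^ (q:ℝ) := Real.rpow_le_rpow (by positivity) h4 hq0.le

end sob

theorem exists_trunc {N : ℕ} {Ω : Set (EuclideanSpace ℝ (Fin N))}
    (hΩo : IsOpen Ω) (hΩb : Bornology.IsBounded Ω) (p : ℝ) (hp : 2 < p)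
    (u : EuclideanSpace ℝ (Fin N) → ℝ) (hcont : ContinuousOn u (closure Ω))
    (hu : ContDiffOn ℝ 2 u Ω) (hb : ∀ x ∈ frontier Ω, u x = 0)
    (hlap : ∀ x ∈ Ω, -(max (u x - 1) 0) ^ (p - 1) ≤ lap u x) :
    ∃ f : EuclideanSpace ℝ (Fin N) → ℝ, ContDiff ℝ 2 f ∧ HasCompactSupport f ∧
      Function.support f ⊆ Ω ∧ (∀ x, 0 ≤ f x) ∧ (∀ x ∈ Ω, u x - 2 ≤ f x) ∧
      (∀ x ∈ Ω, ‖fderiv ℝ f x‖ ≤ ‖fderiv ℝ u x‖) ∧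
      (∀ x, -(f x + 1) ^ (p - 1) ≤ lap f x) := by
  obtain ⟨g, g', g'', hg, hg1, hg2, hg2n, hg1n, hg1l, hg0, hg10, hgl, hgn⟩ := exists_conv
  set f : EuclideanSpace ℝ (Fin N) → ℝ := Ω.indicator (fun x => g (u x - 1)) with hf
  set S : Set (EuclideanSpace ℝ (Fin N)) := closure Ω ∩ u ⁻¹' (Ici 1) with hS
  have hSc : IsClosed S := hcont.preimage_isClosed_of_isClosed isClosed_closure isClosed_Ici
  have hSk : IsCompact S := hΩb.isCompact_closure.of_isClosed_subset hSc inter_subset_left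
  have hSΩ : S ⊆ Ω := by
    rintro x ⟨hx, hx1⟩
    by_contra h
    have : x ∈ frontier Ω := by
      rw [hΩo.frontier_eq]; exact ⟨hx, h⟩
    have h1 := hb x this
    have h2 : (1:ℝ) ≤ u x := hx1
    linarith
  have hfΩ : ∀ x ∈ Ω, f x = g (u x - 1) := fun x hx => indicator_of_mem hx _
  have hfS : ∀ x, x ∉ S → f x = 0 := by
    intro x hx
    by_cases h : x ∈ Ω
    · rw [hfΩ x h]
      refine hg0 _ ?_
      by_contra h1
      exact hx ⟨subset_closure h, by simp only [mem_preimage, mem_Ici]; linarith⟩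
    · exact indicator_of_notMem h _
  have hfS' : ∀ x, x ∉ S → f =ᶠ[nhds x] fun _ => 0 := by
    intro x hx
    filter_upwards [hSc.isOpen_compl.mem_nhds hx] with y hy
    exact hfS y hy
  have hfe : ∀ x ∈ Ω, f =ᶠ[nhds x] fun y => g (u y - 1) := by
    intro x hx
    filter_upwards [hΩo.mem_nhds hx] with y hy
    exact hfΩ y hy
  have huA : ∀ x ∈ Ω, ContDiffAt ℝ 2 u x := fun x hx => hu.contDiffAt (hΩo.mem_nhds hx)
  have hud : ∀ x ∈ Ω, HasFDerivAt u (fderiv ℝ u x) x := fun x hx =>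
    ((huA x hx).differentiableAt (by norm_num)).hasFDerivAt
  have hfd : ∀ x ∈ Ω, fderiv ℝ f x = g' (u x - 1) • fderiv ℝ u x := by
    intro x hx
    rw [(hfe x hx).fderiv_eq]
    exact ((hg1 (u x - 1)).comp_hasFDerivAt x ((hud x hx).sub_const 1)).fderiv
  refine ⟨f, ?_, HasCompactSupport.intro hSk hfS, ?_, ?_, ?_, ?_, ?_⟩
  · rw [contDiff_iff_contDiffAt]
    intro x
    by_cases hx : x ∈ S
    · refine ContDiffAt.congr_of_eventuallyEq ?_ (hfe x (hSΩ hx))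
      exact hg.contDiffAt.comp x ((huA x (hSΩ hx)).sub contDiffAt_const)
    · exact contDiffAt_const.congr_of_eventuallyEq (hfS' x hx)
  · exact support_indicator_subset
  · exact fun x => indicator_nonneg (fun y _ => hgn _) x
  · intro x hx
    rw [hfΩ x hx]
    linarith [hgl (u x - 1)]
  · intro x hx
    rw [hfd x hx, norm_smul, Real.norm_of_nonneg (hg1n _)]
    exact mul_le_of_le_one_left (norm_nonneg _) (hg1l _)
  · intro x
    by_cases hx : x ∈ S
    · have hxΩ := hSΩ hx
      have hl : lap f x = g'' (u x - 1) * ∑ i : Fin N, (fderiv ℝ u x (EuclideanSpace.single i 1)) ^ 2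
          + g' (u x - 1) * lap u x := by
        unfold lap
        rw [Finset.mul_sum, Finset.mul_sum, ← Finset.sum_add_distrib]
        refine Finset.sum_congr rfl fun i _ => ?_
        have e1 : (fun y => fderiv ℝ f y (EuclideanSpace.single i 1)) =ᶠ[nhds x]
            fun y => g' (u y - 1) * fderiv ℝ u y (EuclideanSpace.single i 1) := by
          filter_upwards [hΩo.mem_nhds hxΩ] with y hy
          rw [hfd y hy]; simp
        rw [e1.fderiv_eq]
        have d1 := (hg2 (u x - 1)).comp_hasFDerivAt x ((hud x hxΩ).sub_const 1)
        have d2 : DifferentiableAt ℝ (fun y => fderiv ℝ u y (EuclideanSpace.single i 1)) x :=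
          (((huA x hxΩ).fderiv_right (m := 1) (by norm_num)).differentiableAt
            (by norm_num)).clm_apply (differentiableAt_const _)
        have d3 := d1.mul d2.hasFDerivAt
        have d4 : fderiv ℝ (fun y => g' (u y - 1) * fderiv ℝ u y (EuclideanSpace.single i 1)) x = _ :=
          d3.fderiv
        rw [d4]
        simp
        ring
      rw [hl]
      have h1 : 0 ≤ g'' (u x - 1) * ∑ i : Fin N, (fderiv ℝ u x (EuclideanSpace.single i 1)) ^ 2 :=
        mul_nonneg (hg2n _) (Finset.sum_nonneg fun i _ => sq_nonneg _)
      have h2 : max (u x - 1) 0 ≤ f x + 1 := by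
        rw [hfΩ x hxΩ]
        exact max_le (by linarith [hgl (u x - 1)]) (by linarith [hgn (u x - 1)])
      have h3 : (max (u x - 1) 0) ^ (p - 1) ≤ (f x + 1) ^ (p - 1) :=
        Real.rpow_le_rpow (le_max_right _ _) h2 (by linarith)
      have h4 : 0 ≤ (max (u x - 1) 0) ^ (p - 1) := Real.rpow_nonneg (le_max_right _ _) _
      have h5 := mul_le_mul_of_nonneg_left (hlap x hxΩ) (hg1n (u x - 1))
      have h6 := mul_le_of_le_one_left h4 (hg1l (u x - 1))
      linarith
    · have h0 : lap f x = 0 := by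
        unfold lap
        refine Finset.sum_eq_zero fun i _ => ?_
        have e1 : (fun y => fderiv ℝ f y (EuclideanSpace.single i 1)) =ᶠ[nhds x]
            fun _ => 0 := by
          filter_upwards [hSc.isOpen_compl.mem_nhds hx] with y hy
          rw [(hfS' y hy).fderiv_eq]; simp
        rw [e1.fderiv_eq]; simp
      rw [h0, hfS x hx]
      simp

set_option maxHeartbeats 400000 in
theorem stmt_7 {N : ℕ} (hN : 2 ≤ N) (Ω : Set (EuclideanSpace ℝ (Fin N)))
    (hΩo : IsOpen Ω) (hΩb : Bornology.IsBounded Ω) (p : ℝ) (hp : 2 < p)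
    (hpSub : 3 ≤ N → p < 2 * (N : ℝ) / ((N : ℝ) - 2))
    (β : ℝ → ℝ) (hβc : Continuous β) (hβ0 : ∀ s, 0 ≤ β s)
    (K : ℝ) (hK : 0 < K) :
    ∃ C > (0 : ℝ), ∀ ε : ℝ, ε ∈ Set.Ioc (0 : ℝ) 1 →
      ∀ u : EuclideanSpace ℝ (Fin N) → ℝ,
        (∃ L : NNReal, LipschitzOnWith L u (closure Ω)) →
        ContDiffOn ℝ 2 u Ω →
        (∀ x ∈ frontier Ω, u x = 0) →
        (∀ x ∈ Ω, lap u x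
          = (1 / ε) * β ((u x - 1) / ε) - (max (u x - 1) 0) ^ (p - 1)) →
        (∫ x in Ω, ‖gradient u x‖ ^ 2) ≤ K →
        ∀ x ∈ Ω, u x ≤ C := by
  obtain ⟨a, q, ha, ha2, haN, hq, hqN, haq⟩ := exists_exponents hN p hp hpSub
  obtain ⟨D, hD, hSob⟩ := sobolev_bound hN hΩb K ha ha2 haN hq haq
  have hq1 : (1:ℝ) ≤ q := by exact_mod_cast hq
  obtain ⟨C, hC⟩ := algebra_bound N p q (∫ y, eker (N := N) y) (∫ y, hker (N := N) y) D
    eker_int_pos (integral_nonneg hker_nonneg) hD hqN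
  refine ⟨max C 1 + 2, by positivity, ?_⟩
  rintro ε ⟨hε, -⟩ u ⟨L, hL⟩ hu hb hlap hgrad x hx
  obtain ⟨f, hf, hfs, hfsup, hfn, hfu, hfd, hfl⟩ := exists_trunc hΩo hΩb p hp u hL.continuousOn hu hb
    (fun x hx => by
      rw [hlap x hx]
      have := hβ0 ((u x - 1) / ε)
      have : 0 ≤ (1 / ε) * β ((u x - 1) / ε) := by positivity
      linarith)
  have hdc : Continuous (fderiv ℝ f) := hf.continuous_fderiv (by norm_num)
  -- energy bound
  have hE : ∫ x, ‖fderiv ℝ f x‖ ^ 2 ≤ K := by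
    refine le_trans ?_ hgrad
    have hnn : ∀ y, ‖gradient u y‖ = ‖fderiv ℝ u y‖ := fun y => by simp [gradient]
    have h0 : ∀ y, y ∉ Ω → ‖fderiv ℝ f y‖ ^ 2 = 0 := by
      intro y hy
      have hy' : f y = 0 := by
        by_contra h; exact hy (hfsup h)
      have hmin : IsLocalMin f y := by
        filter_upwards with z
        rw [hy']; exact hfn z
      rw [hmin.fderiv_eq_zero]; simp
    rw [← setIntegral_eq_integral_of_forall_compl_eq_zero h0]
    refine setIntegral_mono_on ?_ ?_ hΩo.measurableSet ?_
    · have hs2 : HasCompactSupport (fun y => ‖fderiv ℝ f y‖ ^ 2) := by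
        refine HasCompactSupport.intro (K := tsupport (fderiv ℝ f)) (hfs.fderiv (𝕜 := ℝ)) ?_
        intro y hy
        rw [image_eq_zero_of_notMem_tsupport hy]; simp
      have hi : Integrable (fun y => ‖fderiv ℝ f y‖ ^ 2) :=
        (hdc.norm.pow 2).integrable_of_hasCompactSupport hs2
      exact hi.integrableOn
    · simp only [hnn]
      have hcu : ContinuousOn (fun y => ‖fderiv ℝ u y‖ ^ 2) Ω :=
        ((hu.continuousOn_fderiv_of_isOpen hΩo (by norm_num)).norm).pow 2
      refine IntegrableOn.of_bound hΩb.measure_lt_top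
        (hcu.aestronglyMeasurable hΩo.measurableSet) ((L:ℝ) ^ 2) ?_
      filter_upwards [ae_restrict_mem hΩo.measurableSet] with y hy
      rw [norm_pow, norm_norm]
      gcongr
      exact norm_fderiv_le_of_lipschitzOn ℝ (hΩo.mem_nhds hy) (hL.mono subset_closure)
    · intro y hy
      rw [hnn]
      have := hfd y hy
      gcongr
  have hI := hSob f (hf.of_le (by norm_num)) hfs hfsup hfn hE
  obtain ⟨x0, hx0⟩ := hf.continuous.exists_forall_ge_of_hasCompactSupport hfs
  have hmC : f x0 ≤ max C 1 := by
    rcases le_total (f x0) 1 with h1 | h1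
    · exact h1.trans (le_max_right _ _)
    refine le_trans (hC (f x0) h1 fun R hR => ?_) (le_max_left _ _)
    set m := f x0 with hm
    have hmv := mean_value hf hfs ((2 * m) ^ (p - 1)) (fun y => by
      refine le_trans ?_ (hfl y)
      have := Real.rpow_le_rpow (by linarith [hfn y]) (show f y + 1 ≤ 2 * m by linarith [hx0 y])
        (show 0 ≤ p - 1 by linarith)
      linarith) x0 R hR.le
    refine hmv.trans (add_le_add_left ?_ _)
    have hcq : Continuous (fun y => f y ^ (q:ℝ)) :=
      hf.continuous.rpow_const fun _ => Or.inr (by linarith)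
    have hcqs : HasCompactSupport (fun y => f y ^ (q:ℝ)) :=
      hfs.comp_left (g := fun t : ℝ => t ^ (q:ℝ)) (Real.zero_rpow (by linarith))
    have hm4 : 0 < m / 4 := by linarith
    have hfc := hf.continuous
    have hck := eker_continuous (N := N)
    have hiq : Integrable (fun y => f (x0 + R • y) ^ (q:ℝ)) := by
      have h1 : Integrable (fun y => f (x0 + y) ^ (q:ℝ)) :=
        (hcq.integrable_of_hasCompactSupport hcqs).comp_add_left x0
      exact h1.comp_smul hR.ne'
    have hval : ∫ y, f (x0 + R • y) ^ (q:ℝ) = (R ^ N)⁻¹ * ∫ y, f y ^ (q:ℝ) := by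
      have h1 := Measure.integral_comp_smul_of_nonneg (volume : Measure (EuclideanSpace ℝ (Fin N)))
        (fun y => f (x0 + y) ^ (q:ℝ)) R (hR := hR.le)
      rw [integral_add_left_eq_self (fun y => f y ^ (q:ℝ)) x0] at h1
      simpa using h1
    have hmp : 0 ≤ (m / 4) ^ (1 - (q:ℝ)) := by positivity
    have hiq' : Integrable (fun y => (m / 4) ^ (1 - (q:ℝ)) * (6 * f (x0 + R • y) ^ (q:ℝ))) :=
      (hiq.const_mul 6).const_mul _
    have hie : Integrable (fun y : EuclideanSpace ℝ (Fin N) => eker y * (m / 4)) :=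
      (hck.integrable_of_hasCompactSupport eker_supp).mul_const _
    calc ∫ y, f (x0 + R • y) * eker y
        ≤ ∫ y, (eker y * (m / 4) + (m / 4) ^ (1 - (q:ℝ)) * (6 * f (x0 + R • y) ^ (q:ℝ))) := by
          refine integral_mono (cint (by fun_prop) hck eker_supp) (hie.add hiq') fun y => ?_
          have h1 := young_pt (hfn (x0 + R • y)) hm4 hq1
          have h2 := mul_le_mul_of_nonneg_right h1 (eker_nonneg y)
          have h3 : 0 ≤ (m / 4) ^ (1 - (q:ℝ)) * f (x0 + R • y) ^ (q:ℝ) :=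
            mul_nonneg hmp (Real.rpow_nonneg (hfn _) _)
          have h4 := mul_le_mul_of_nonneg_left (eker_le y) h3
          simp only
          linarith
      _ = (∫ y, eker (N := N) y) * (m / 4) + (m / 4) ^ (1 - (q:ℝ)) *
            (6 * ((R ^ N)⁻¹ * ∫ y, f y ^ (q:ℝ))) := by
          rw [integral_add hie hiq', integral_mul_const, integral_const_mul, integral_const_mul, hval]
      _ ≤ _ := by gcongr
  linarith [hfu x hx, hx0 x]
end
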